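/- Every connected bridgeless cubic planar simple graph with n ≥ 4 vertices has at least 2^(√n / 100) circuit double covers. -/

import Mathlib

namespace CiDC

open SimpleGraph

/-- A circuit in a graph: a connected 2-regular subgraph. -/
def IsCircuit {V : Type*} {G : SimpleGraph V} (H : G.Subgraph) : Prop :=
  H.Connected ∧ ∀ v ∈ H.verts, (H.neighborSet v).ncard = 2

open scoped Classical in
/-- A circuit double cover: a multiset of circuits covering every edge exactly twice
(counted with multiplicity). -/
def IsCiDC {V : Type*} (G : SimpleGraph V) (C : Multiset G.Subgraph) : Prop :=
  (∀ H ∈ C, IsCircuit H) ∧ ∀ e ∈ G.edgeSet, C.countP (fun H => e ∈ H.edgeSet) = 2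

/-- ν(G): the number of circuit double covers of `G`. -/
noncomputable def nu {V : Type*} (G : SimpleGraph V) : ℕ :=
  {C : Multiset G.Subgraph | IsCiDC G C}.ncard

/-- A cubic graph: every vertex has degree 3. -/
def IsCubic {V : Type*} (G : SimpleGraph V) : Prop :=
  ∀ v : V, (G.neighborSet v).ncard = 3



/-- A rotation system on a graph: a permutation of the darts fixing the tail of each dart
and acting with a single cycle on the darts at each vertex (i.e. a cyclic ordering of the
edge-ends at each vertex). -/
structure RotationSystem {V : Type*} (G : SimpleGraph V) where
  σ : Equiv.Perm G.Dart
  fst_eq : ∀ d : G.Dart, (σ d).fst = d.fst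
  cyclic : ∀ d d' : G.Dart, d.fst = d'.fst → ∃ n : ℕ, (σ ^ n) d = d'

/-- The face-tracing map of a rotation system: traverse a dart, then turn to the next
dart in the cyclic order at its head. -/
def RotationSystem.faceMap {V : Type*} {G : SimpleGraph V} (rs : RotationSystem G) :
    Equiv.Perm G.Dart :=
  (Function.Involutive.toPerm Dart.symm (fun d => Dart.symm_symm d)).trans rs.σ

/-- The faces of a rotation system are the orbits of the face-tracing map. -/
def RotationSystem.faceSetoid {V : Type*} {G : SimpleGraph V} (rs : RotationSystem G) :
    Setoid G.Dart where
  r := rs.faceMap.SameCycle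
  iseqv := ⟨fun _ => Equiv.Perm.SameCycle.refl _ _,
    Equiv.Perm.SameCycle.symm, Equiv.Perm.SameCycle.trans⟩

/-- The number of faces of a rotation system. -/
noncomputable def RotationSystem.numFaces {V : Type*} {G : SimpleGraph V}
    (rs : RotationSystem G) : ℕ :=
  Nat.card (Quotient rs.faceSetoid)

/-- A connected graph is planar iff some rotation system satisfies Euler's formula
`n - m + F = 2` (written additively to avoid truncated subtraction). -/
def HasPlanarEmbedding {V : Type*} [Fintype V] (G : SimpleGraph V) : Prop :=
  ∃ rs : RotationSystem G, Fintype.card V + rs.numFaces = 2 + G.edgeSet.ncard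


end CiDC

namespace CiDC
open Finset
set_option linter.unusedSectionVars false

/-- An ambient description of a loopless multigraph. -/
structure Gr (α E : Type*) where
  V : Finset α
  inc : α → Finset E

namespace Gr

variable {α E : Type*} [DecidableEq α] [DecidableEq E]

def edges (G : Gr α E) : Finset E := G.V.biUnion G.inc

structure Cub (G : Gr α E) : Prop where
  three : ∀ v ∈ G.V, (G.inc v).card = 3
  two : ∀ e ∈ G.edges, (G.V.filter (fun v => e ∈ G.inc v)).card = 2

def cut (G : Gr α E) (S : Finset α) : Finset E :=
  G.edges.filter (fun e => Odd (S.filter (fun v => e ∈ G.inc v)).card)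

def Conn2 (G : Gr α E) : Prop :=
  ∀ S ⊆ G.V, S.Nonempty → S ≠ G.V → 2 ≤ (G.cut S).card

structure IsEv (G : Gr α E) (C : Finset E) : Prop where
  sub : C ⊆ G.edges
  even : ∀ v ∈ G.V, Even (C ∩ G.inc v).card

structure Circ (G : Gr α E) (C : Finset E) : Prop where
  ev : G.IsEv C
  ne : C.Nonempty
  min : ∀ D ⊆ C, G.IsEv D → D.Nonempty → D = C

structure CDC (G : Gr α E) (𝒞 : Finset (Finset E)) : Prop where
  circ : ∀ C ∈ 𝒞, G.Circ C
  two : ∀ e ∈ G.edges, (𝒞.filter (fun C => e ∈ C)).card = 2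

open scoped Classical in
noncomputable def cdcs (G : Gr α E) : Finset (Finset (Finset E)) :=
  G.edges.powerset.powerset.filter G.CDC

noncomputable def nu (G : Gr α E) : ℕ := G.cdcs.card

def PlanarBy (G : Gr α E) (𝓕 : Finset (Finset E)) : Prop :=
  G.CDC 𝓕 ∧ ∀ D ⊆ G.edges, (∀ f ∈ 𝓕, Even (D ∩ f).card) → ∃ S ⊆ G.V, D = G.cut S

/-- An indexed double cover by even sets. -/
structure EvCover {ι : Type*} (G : Gr α E) (s : Finset ι) (A : ι → Finset E) : Prop where
  ev : ∀ i ∈ s, G.IsEv (A i)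
  two : ∀ e ∈ G.edges, (s.filter (fun i => e ∈ A i)).card = 2

open scoped Classical in
noncomputable def comps (G : Gr α E) (A : Finset E) : Finset (Finset E) :=
  A.powerset.filter G.Circ

open scoped Classical in
noncomputable def refine {ι : Type*} (G : Gr α E) (s : Finset ι) (A : ι → Finset E) :
    Finset (Finset E) := s.biUnion (fun i => G.comps (A i))

def sumset (G : Gr α E) (M : Finset (Finset E)) : Finset E :=
  G.edges.filter (fun e => Odd (M.filter (fun g => e ∈ g)).card)

variable {G : Gr α E}

lemma mem_edges {e : E} : e ∈ G.edges ↔ ∃ v ∈ G.V, e ∈ G.inc v := by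
  simp [edges]

lemma inc_sub {v : α} (hv : v ∈ G.V) : G.inc v ⊆ G.edges := fun _ he => mem_edges.2 ⟨v, hv, he⟩

lemma mem_cdcs {𝒞 : Finset (Finset E)} : 𝒞 ∈ G.cdcs ↔ G.CDC 𝒞 := by
  simp only [cdcs, mem_filter, mem_powerset, and_iff_right_iff_imp]
  intro h C hC
  exact mem_powerset.2 (h.circ C hC).ev.sub

lemma mem_comps {A C : Finset E} : C ∈ G.comps A ↔ C ⊆ A ∧ G.Circ C := by
  simp [comps]

lemma CDC.cover {𝒞 : Finset (Finset E)} (h : G.CDC 𝒞) : G.EvCover 𝒞 id :=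
  ⟨fun C hC => (h.circ C hC).ev, h.two⟩

lemma IsEv.sdiff {C D : Finset E} (hC : G.IsEv C) (hD : G.IsEv D) (h : D ⊆ C) :
    G.IsEv (C \ D) := by
  refine ⟨sdiff_subset.trans hC.sub, fun v hv => ?_⟩
  have h1 : (C \ D) ∩ G.inc v = (C ∩ G.inc v) \ (D ∩ G.inc v) := by
    ext e; simp only [mem_inter, mem_sdiff]; tauto
  have h2 : D ∩ G.inc v ⊆ C ∩ G.inc v := inter_subset_inter_right h
  rw [h1, card_sdiff_of_subset h2]
  have := hC.even v hv
  have := hD.even v hv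
  have := card_le_card h2
  exact (Nat.even_sub this).2 (by tauto)

/-- parity double counting -/
lemma parity_count {β γ : Type*} [DecidableEq β] [DecidableEq γ] (s : Finset β) (t : Finset γ)
    (r : β → γ → Prop) [∀ b c, Decidable (r b c)]
    (h : ∀ b ∈ s, Even (t.filter (fun c => r b c)).card) :
    Even (t.filter (fun c => Odd (s.filter (fun b => r b c)).card)).card := by
  rw [← Finset.even_sum_iff_even_card_odd]
  rw [show ∑ c ∈ t, (s.filter (fun b => r b c)).card = ∑ b ∈ s, (t.filter (fun c => r b c)).card from
    (Finset.sum_card_bipartiteAbove_eq_sum_card_bipartiteBelow (s := s) (t := t) r).symm]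
  exact Finset.even_sum _ h

lemma IsEv.cut {C : Finset E} (hC : G.IsEv C) {S : Finset α} (hS : S ⊆ G.V) :
    Even (C ∩ G.cut S).card := by
  have := parity_count S C (fun v e => e ∈ G.inc v) (fun v hv => by
    have := hC.even v (hS hv)
    rwa [← filter_mem_eq_inter] at this)
  convert this using 2
  ext e
  simp only [Gr.cut, mem_inter, mem_filter]
  have := @hC.sub e
  tauto

lemma isEv_sumset {M : Finset (Finset E)} (hM : ∀ g ∈ M, G.IsEv g) : G.IsEv (G.sumset M) := by
  refine ⟨filter_subset _ _, fun v hv => ?_⟩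
  have := parity_count M (G.inc v) (fun g e => e ∈ g) (fun g hg => by
    have := (hM g hg).even v hv
    rwa [inter_comm, ← filter_mem_eq_inter] at this)
  convert this using 2
  ext e
  simp only [Gr.sumset, mem_inter, mem_filter]
  have := @inc_sub _ _ _ _ G v hv e
  tauto

lemma cut_parity (hG : G.Cub) {S : Finset α} (hS : S ⊆ G.V) :
    Even (G.cut S).card ↔ Even S.card := by
  have h1 : ∑ e ∈ G.edges, (S.filter (fun v => e ∈ G.inc v)).card
      = ∑ v ∈ S, (G.edges.filter (fun e => e ∈ G.inc v)).card :=
    (Finset.sum_card_bipartiteAbove_eq_sum_card_bipartiteBelow (s := S) (t := G.edges)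
      (fun v e => e ∈ G.inc v)).symm
  have h2 : ∑ v ∈ S, (G.edges.filter (fun e => e ∈ G.inc v)).card = S.card * 3 := by
    rw [sum_const_nat]
    intro v hv
    rw [filter_mem_eq_inter, inter_eq_right.2 (inc_sub (hS hv)), hG.three v (hS hv)]
  have h3 := Finset.even_sum_iff_even_card_odd (s := G.edges)
    (fun e => (S.filter (fun v => e ∈ G.inc v)).card)
  rw [h1, h2] at h3
  rw [Gr.cut, ← h3, Nat.even_mul]
  have : ¬ Even 3 := by decide
  tauto

lemma exists_comp {A : Finset E} (hA : G.IsEv A) {e : E} (he : e ∈ A) :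
    ∃ C ∈ G.comps A, e ∈ C := by
  classical
  obtain ⟨C, hC, hmin⟩ := (A.powerset.filter (fun C => G.IsEv C ∧ e ∈ C)).exists_min_image
    Finset.card ⟨A, by simp [hA, he]⟩
  simp only [mem_filter, mem_powerset] at hC hmin
  refine ⟨C, mem_comps.2 ⟨hC.1, hC.2.1, ⟨e, hC.2.2⟩, ?_⟩, hC.2.2⟩
  intro D hD hDe hne
  by_cases heD : e ∈ D
  · exact eq_of_subset_of_card_le hD (hmin D ⟨hD.trans hC.1, hDe, heD⟩)
  · exfalso
    have := hmin (C \ D) ⟨sdiff_subset.trans hC.1, hC.2.1.sdiff hDe hD, by simp [heD, hC.2.2]⟩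
    rw [card_sdiff_of_subset hD] at this
    have h1 := hne.card_pos
    have h2 := card_le_card hD
    omega

lemma IsEv.inc_eq (hG : G.Cub) {A C : Finset E} (hA : G.IsEv A) (hC : G.IsEv C) (hCA : C ⊆ A)
    {v : α} (hv : v ∈ G.V) {e : E} (heC : e ∈ C) (hev : e ∈ G.inc v) :
    C ∩ G.inc v = A ∩ G.inc v := by
  have h1 : C ∩ G.inc v ⊆ A ∩ G.inc v := inter_subset_inter_right hCA
  refine eq_of_subset_of_card_le h1 ?_
  have h2 : 0 < (C ∩ G.inc v).card := card_pos.2 ⟨e, by simp [heC, hev]⟩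
  have h3 : (A ∩ G.inc v).card ≤ 3 := hG.three v hv ▸ card_le_card inter_subset_right
  obtain ⟨a, ha⟩ := hA.even v hv
  obtain ⟨b, hb⟩ := hC.even v hv
  omega

lemma comp_unique (hG : G.Cub) {A C C' : Finset E} (hA : G.IsEv A) {e : E}
    (hC : C ∈ G.comps A) (hC' : C' ∈ G.comps A) (he : e ∈ C) (he' : e ∈ C') : C = C' := by
  rw [mem_comps] at hC hC'
  have key : G.IsEv (C ∩ C') := by
    refine ⟨inter_subset_left.trans hC.2.ev.sub, fun v hv => ?_⟩
    by_cases h : ∃ x ∈ C ∩ C', x ∈ G.inc v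
    · obtain ⟨x, hx, hxv⟩ := h
      rw [mem_inter] at hx
      have h1 := IsEv.inc_eq hG hA hC.2.ev hC.1 hv hx.1 hxv
      have h2 := IsEv.inc_eq hG hA hC'.2.ev hC'.1 hv hx.2 hxv
      have : C ∩ C' ∩ G.inc v = C ∩ G.inc v := by
        rw [inter_right_comm, h1, ← h2]
        ext y; simp only [mem_inter]; tauto
      rw [this]; exact hC.2.ev.even v hv
    · have : C ∩ C' ∩ G.inc v = ∅ := by
        ext y; constructor
        · intro hy; exact (h ⟨y, (mem_inter.1 hy).1, (mem_inter.1 hy).2⟩).elim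
        · simp
      rw [this]; simp
  have hn : (C ∩ C').Nonempty := ⟨e, by simp [he, he']⟩
  rw [← hC.2.min _ inter_subset_left key hn]
  exact hC'.2.min _ inter_subset_right key hn

lemma even_of_comps (hG : G.Cub) {A D : Finset E} (hA : G.IsEv A)
    (h : ∀ C ∈ G.comps A, Even (D ∩ C).card) : Even (D ∩ A).card := by
  have h1 : D ∩ A = (G.comps A).biUnion (fun C => D ∩ C) := by
    ext e
    simp only [mem_inter, mem_biUnion]
    constructor
    · rintro ⟨hD, hA'⟩
      obtain ⟨C, hC, he⟩ := exists_comp hA hA'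
      exact ⟨C, hC, hD, he⟩
    · rintro ⟨C, hC, hD, he⟩
      exact ⟨hD, (mem_comps.1 hC).1 he⟩
  rw [h1, card_biUnion]
  · exact even_sum _ h
  · intro C hC C' hC' hne
    show Disjoint (D ∩ C) (D ∩ C')
    rw [disjoint_left]
    intro e he he'
    exact hne (comp_unique hG hA hC hC' (mem_inter.1 he).2 (mem_inter.1 he').2)

lemma pair_unique {ι : Type*} (hG : G.Cub) {s : Finset ι} {A : ι → Finset E}
    (h : G.EvCover s A) {v : α} (hv : v ∈ G.V) {a b : E} (ha : a ∈ G.inc v) (hb : b ∈ G.inc v)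
    (hab : a ≠ b) : (s.filter (fun i => a ∈ A i ∧ b ∈ A i)).card = 1 := by
  classical
  obtain ⟨c, hc, hca, hcb⟩ : ∃ c ∈ G.inc v, c ≠ a ∧ c ≠ b := by
    have : (G.inc v \ {a, b}).Nonempty := by
      rw [← card_pos]
      have h1 := le_card_sdiff ({a, b} : Finset E) (G.inc v)
      have h2 := card_pair hab
      have h3 := hG.three v hv
      omega
    obtain ⟨c, hc⟩ := this
    simp at hc
    exact ⟨c, hc.1, hc.2⟩
  have hinc : G.inc v = {a, b, c} := by
    symm
    apply eq_of_subset_of_card_le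
    · intro x; simp; rintro (rfl | rfl | rfl) <;> assumption
    · rw [hG.three v hv, card_eq_three.2 ⟨a, b, c, hab, hca.symm, hcb.symm, rfl⟩]
  have hev : ∀ i ∈ s, (a ∈ A i ∧ b ∈ A i ∧ c ∉ A i) ∨ (a ∈ A i ∧ b ∉ A i ∧ c ∈ A i) ∨
      (a ∉ A i ∧ b ∈ A i ∧ c ∈ A i) ∨ (a ∉ A i ∧ b ∉ A i ∧ c ∉ A i) := by
    intro i hi
    have := (h.ev i hi).even v hv
    rw [hinc, inter_comm, ← filter_mem_eq_inter] at this
    rw [filter_insert, filter_insert, filter_singleton] at this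
    by_cases h1 : a ∈ A i <;> by_cases h2 : b ∈ A i <;> by_cases h3 : c ∈ A i <;>
      simp [h1, h2, h3, hab, hca.symm, hcb.symm] at this ⊢
    exact absurd this (by decide)
  have key : ∀ x y z : E, (∀ i ∈ s, (x ∈ A i ↔ (x ∈ A i ∧ y ∈ A i) ∨ (x ∈ A i ∧ z ∈ A i)) ∧
      ¬ (x ∈ A i ∧ y ∈ A i ∧ z ∈ A i)) → x ∈ G.edges →
      (s.filter (fun i => x ∈ A i ∧ y ∈ A i)).card + (s.filter (fun i => x ∈ A i ∧ z ∈ A i)).card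
        = 2 := by
    intro x y z hxyz hx
    rw [← h.two x hx, ← card_union_of_disjoint]
    · congr 1
      ext i
      simp only [mem_union, mem_filter]
      constructor
      · tauto
      · rintro ⟨hi, hx⟩
        have := (hxyz i hi).1.1 hx
        tauto
    · rw [disjoint_left]
      intro i hi hi'
      simp only [mem_filter] at hi hi'
      exact (hxyz i hi.1).2 ⟨hi.2.1, hi.2.2, hi'.2.2⟩
  have k1 := key a b c (fun i hi => by have := hev i hi; tauto) (inc_sub hv ha)
  have k2 := key b a c (fun i hi => by have := hev i hi; tauto) (inc_sub hv hb)
  have k3 := key c a b (fun i hi => by have := hev i hi; tauto) (inc_sub hv hc)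
  simp only [and_comm (a := b ∈ _) (b := a ∈ _), and_comm (a := c ∈ _) (b := a ∈ _),
    and_comm (a := c ∈ _) (b := b ∈ _)] at k1 k2 k3
  omega

lemma refine_cdc {ι : Type*} (hG : G.Cub) {s : Finset ι} {A : ι → Finset E}
    (h : G.EvCover s A) : G.CDC (G.refine s A) := by
  classical
  constructor
  · intro C hC
    simp only [refine, mem_biUnion] at hC
    obtain ⟨i, -, hC⟩ := hC
    exact (mem_comps.1 hC).2
  · intro e he
    obtain ⟨i, j, hij, hs⟩ := card_eq_two.1 (h.two e he)
    have hi : i ∈ s ∧ e ∈ A i := by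
      have : i ∈ s.filter (fun i => e ∈ A i) := by rw [hs]; simp
      simpa using this
    have hj : j ∈ s ∧ e ∈ A j := by
      have : j ∈ s.filter (fun i => e ∈ A i) := by rw [hs]; simp
      simpa using this
    obtain ⟨C, hC, heC⟩ := exists_comp (h.ev i hi.1) hi.2
    obtain ⟨C', hC', heC'⟩ := exists_comp (h.ev j hj.1) hj.2
    have hne : C ≠ C' := by
      rintro rfl
      obtain ⟨v, hv, hev⟩ := mem_edges.1 he
      have h2 := (mem_comps.1 hC).2.ev.even v hv
      have h3 : ∃ a ∈ C ∩ G.inc v, a ≠ e := by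
        apply exists_mem_ne
        have : 0 < (C ∩ G.inc v).card := card_pos.2 ⟨e, by simp [heC, hev]⟩
        obtain ⟨k, hk⟩ := h2
        omega
      obtain ⟨a, ha, hae⟩ := h3
      rw [mem_inter] at ha
      have h4 := pair_unique hG h hv hev ha.2 hae.symm
      have h5 : ({i, j} : Finset ι) ⊆ s.filter (fun i => e ∈ A i ∧ a ∈ A i) := by
        intro x hx
        simp only [mem_insert, mem_singleton] at hx
        rcases hx with rfl | rfl
        · simp [hi, (mem_comps.1 hC).1 ha.1]
        · simp [hj, (mem_comps.1 hC').1 ha.1]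
      have := card_le_card h5
      rw [card_pair hij] at this
      omega
    rw [card_eq_two]
    refine ⟨C, C', hne, ?_⟩
    ext X
    simp only [refine, mem_filter, mem_biUnion, mem_insert, mem_singleton]
    constructor
    · rintro ⟨⟨k, hk, hX⟩, heX⟩
      have : k ∈ s.filter (fun i => e ∈ A i) := by simp [hk, (mem_comps.1 hX).1 heX]
      rw [hs] at this
      simp only [mem_insert, mem_singleton] at this
      rcases this with rfl | rfl
      · exact Or.inl (comp_unique hG (h.ev _ hk) hX hC heX heC)
      · exact Or.inr (comp_unique hG (h.ev _ hk) hX hC' heX heC')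
    · rintro (rfl | rfl)
      · exact ⟨⟨i, hi.1, hC⟩, heC⟩
      · exact ⟨⟨j, hj.1, hC'⟩, heC'⟩

lemma refine_planar {ι : Type*} (hG : G.Cub) {s : Finset ι} {A : ι → Finset E}
    (h : G.EvCover s A)
    (hD : ∀ D ⊆ G.edges, (∀ i ∈ s, Even (D ∩ A i).card) → ∃ S ⊆ G.V, D = G.cut S) :
    G.PlanarBy (G.refine s A) := by
  classical
  refine ⟨refine_cdc hG h, fun D hDs hDe => hD D hDs fun i hi => ?_⟩
  apply even_of_comps hG (h.ev i hi)
  intro C hC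
  exact hDe C (by simp only [refine, mem_biUnion]; exact ⟨i, hi, hC⟩)

lemma cut_compl (hG : G.Cub) {S : Finset α} (hS : S ⊆ G.V) : G.cut (G.V \ S) = G.cut S := by
  unfold cut
  apply filter_congr
  intro e he
  have h1 := hG.two e he
  have h2 : ((G.V \ S).filter (fun v => e ∈ G.inc v)).card + (S.filter (fun v => e ∈ G.inc v)).card
      = 2 := by
    rw [← h1, ← card_union_of_disjoint]
    · congr 1
      rw [← filter_union, sdiff_union_of_subset hS]
    · exact disjoint_filter_filter disjoint_sdiff_self_left
  rw [← Nat.not_even_iff_odd, ← Nat.not_even_iff_odd]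
  have : Even (((G.V \ S).filter (fun v => e ∈ G.inc v)).card +
    (S.filter (fun v => e ∈ G.inc v)).card) := by rw [h2]; decide
  rw [Nat.even_add] at this
  tauto

lemma one_le_nu {𝓕 : Finset (Finset E)} (h : G.CDC 𝓕) : 1 ≤ G.nu :=
  card_pos.2 ⟨𝓕, mem_cdcs.2 h⟩

end Gr
end CiDC

namespace CiDC
open Finset
set_option linter.unusedSectionVars false
set_option linter.unusedVariables false
namespace Gr

variable {α E : Type*} [DecidableEq α] [DecidableEq E] {G : Gr α E}

structure Ends (G : Gr α E) (e : E) (u w : α) : Prop where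
  hu : u ∈ G.V
  hw : w ∈ G.V
  ne : u ≠ w
  iff : ∀ v ∈ G.V, (e ∈ G.inc v ↔ v = u ∨ v = w)

lemma Ends.symm {e : E} {u w : α} (h : G.Ends e u w) : G.Ends e w u :=
  ⟨h.hw, h.hu, h.ne.symm, fun v hv => by rw [h.iff v hv]; tauto⟩

lemma Ends.left {e : E} {u w : α} (h : G.Ends e u w) : e ∈ G.inc u := (h.iff u h.hu).2 (Or.inl rfl)
lemma Ends.right {e : E} {u w : α} (h : G.Ends e u w) : e ∈ G.inc w := (h.iff w h.hw).2 (Or.inr rfl)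
lemma Ends.mem {e : E} {u w : α} (h : G.Ends e u w) : e ∈ G.edges := inc_sub h.hu h.left

lemma Ends.filter {e : E} {u w : α} (h : G.Ends e u w) :
    G.V.filter (fun v => e ∈ G.inc v) = {u, w} := by
  ext v
  simp only [mem_filter, mem_insert, mem_singleton]
  constructor
  · rintro ⟨hv, he⟩; exact (h.iff v hv).1 he
  · rintro (rfl | rfl)
    · exact ⟨h.hu, h.left⟩
    · exact ⟨h.hw, h.right⟩

lemma exists_ends (hG : G.Cub) {e : E} (he : e ∈ G.edges) : ∃ u w, G.Ends e u w := by
  obtain ⟨u, w, hne, h⟩ := card_eq_two.1 (hG.two e he)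
  have key : ∀ v, (v ∈ G.V ∧ e ∈ G.inc v) ↔ v = u ∨ v = w := by
    intro v
    have : v ∈ G.V.filter (fun v => e ∈ G.inc v) ↔ v ∈ ({u, w} : Finset α) := by rw [h]
    simpa only [mem_filter, mem_insert, mem_singleton] using this
  exact ⟨u, w, ((key u).2 (Or.inl rfl)).1, ((key w).2 (Or.inr rfl)).1, hne,
    fun v hv => by rw [← key v]; tauto⟩

lemma exists_ends' (hG : G.Cub) {e : E} {u : α} (hu : u ∈ G.V) (he : e ∈ G.inc u) :
    ∃ w, G.Ends e u w := by
  obtain ⟨x, y, h⟩ := exists_ends hG (inc_sub hu he)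
  rcases (h.iff u hu).1 he with rfl | rfl
  · exact ⟨y, h⟩
  · exact ⟨x, h.symm⟩

lemma Ends.mem_cut {e : E} {u w : α} (h : G.Ends e u w) {S : Finset α} (hS : S ⊆ G.V) :
    e ∈ G.cut S ↔ ¬ (u ∈ S ↔ w ∈ S) := by
  have h1 : S.filter (fun v => e ∈ G.inc v) = ({u, w} : Finset α).filter (· ∈ S) := by
    rw [← h.filter]
    ext v
    simp only [mem_filter]
    have := @hS v
    tauto
  rw [cut, mem_filter, h1, filter_insert, filter_singleton]
  have := h.mem
  have h2 : ¬ Odd 2 := by decide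
  by_cases hu : u ∈ S <;> by_cases hw : w ∈ S <;> simp [hu, hw, this, h.ne, card_pair, h2]

lemma cub_of_ends (h3 : ∀ v ∈ G.V, (G.inc v).card = 3) (h : ∀ e ∈ G.edges, ∃ u w, G.Ends e u w) :
    G.Cub := by
  refine ⟨h3, fun e he => ?_⟩
  obtain ⟨u, w, h'⟩ := h e he
  rw [h'.filter, card_pair h'.ne]

/-- contract the complement of `S` to a vertex named `v0` -/
def contr (G : Gr α E) (S : Finset α) (v0 : α) : Gr α E :=
  ⟨insert v0 S, Function.update G.inc v0 (G.cut S)⟩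

section contr
variable {S : Finset α} {v0 : α}

lemma contr_inc (h0 : v0 ∉ S) {v : α} (hv : v ∈ S) : (G.contr S v0).inc v = G.inc v := by
  simp only [contr]
  rw [Function.update_of_ne]
  rintro rfl; exact h0 hv

lemma contr_inc0 : (G.contr S v0).inc v0 = G.cut S := by
  simp [contr]

lemma mem_cut_imp (hG : G.Cub) (hS : S ⊆ G.V) {e : E} (he : e ∈ G.cut S) :
    ∃ u w, G.Ends e u w ∧ u ∈ S ∧ w ∉ S := by
  obtain ⟨u, w, h⟩ := exists_ends hG (mem_filter.1 he).1
  have h1 := (h.mem_cut hS).1 he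
  by_cases hu : u ∈ S
  · exact ⟨u, w, h, hu, fun hw => h1 (by tauto)⟩
  · exact ⟨w, u, h.symm, by tauto, hu⟩

lemma contr_mem_edges (hG : G.Cub) (hS : S ⊆ G.V) (h0 : v0 ∉ S) {e : E} :
    e ∈ (G.contr S v0).edges ↔ ∃ u w, G.Ends e u w ∧ u ∈ S := by
  rw [mem_edges]
  constructor
  · rintro ⟨v, hv, he⟩
    rcases mem_insert.1 hv with rfl | hv
    · rw [contr_inc0] at he
      obtain ⟨u, w, h, hu, -⟩ := mem_cut_imp hG hS he
      exact ⟨u, w, h, hu⟩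
    · rw [contr_inc h0 hv] at he
      obtain ⟨w, h⟩ := exists_ends' hG (hS hv) he
      exact ⟨v, w, h, hv⟩
  · rintro ⟨u, w, h, hu⟩
    exact ⟨u, mem_insert_of_mem hu, by rw [contr_inc h0 hu]; exact h.left⟩

lemma contr_edges_sub (hG : G.Cub) (hS : S ⊆ G.V) (h0 : v0 ∉ S) :
    (G.contr S v0).edges ⊆ G.edges := by
  intro e he
  obtain ⟨u, w, h, -⟩ := (contr_mem_edges hG hS h0).1 he
  exact h.mem

lemma cut_sub_contr (hG : G.Cub) (hS : S ⊆ G.V) (h0 : v0 ∉ S) :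
    G.cut S ⊆ (G.contr S v0).edges := by
  rw [← contr_inc0 (G := G) (v0 := v0)]
  exact inc_sub (by simp [contr])

lemma contr_ends (hG : G.Cub) (hS : S ⊆ G.V) (h0 : v0 ∉ S) {e : E} {u w : α} (h : G.Ends e u w)
    (hu : u ∈ S) : (G.contr S v0).Ends e u (if w ∈ S then w else v0) := by
  have hu0 : u ≠ v0 := by rintro rfl; exact h0 hu
  refine ⟨mem_insert_of_mem hu, ?_, ?_, ?_⟩
  · split_ifs with hw
    · exact mem_insert_of_mem hw
    · exact mem_insert_self _ _
  · split_ifs with hw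
    · exact h.ne
    · exact hu0
  · intro v hv
    rcases mem_insert.1 hv with rfl | hv
    · rw [contr_inc0, h.mem_cut hS]
      have : w ∈ S → v ≠ w := by rintro h rfl; exact h0 h
      split_ifs with hw
      · have := this hw
        have := hu0.symm
        tauto
      · tauto
    · rw [contr_inc h0 hv, h.iff v (hS hv)]
      have : v ≠ v0 := fun hh => h0 (hh ▸ hv)
      split_ifs with hw
      · rfl
      · have : v ≠ w := by rintro rfl; exact hw hv
        tauto

lemma contr_cub (hG : G.Cub) (hS : S ⊆ G.V) (h0 : v0 ∉ S) (h3 : (G.cut S).card = 3) :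
    (G.contr S v0).Cub := by
  apply cub_of_ends
  · intro v hv
    rcases mem_insert.1 hv with rfl | hv
    · rw [contr_inc0, h3]
    · rw [contr_inc h0 hv, hG.three v (hS hv)]
  · intro e he
    obtain ⟨u, w, h, hu⟩ := (contr_mem_edges hG hS h0).1 he
    exact ⟨_, _, contr_ends hG hS h0 h hu⟩

lemma contr_cut (hG : G.Cub) (hS : S ⊆ G.V) (h0 : v0 ∉ S) {T : Finset α} (hT : T ⊆ S) :
    (G.contr S v0).cut T = G.cut T := by
  have hT1 : T ⊆ (G.contr S v0).V := hT.trans (subset_insert _ _)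
  ext e
  by_cases he : e ∈ (G.contr S v0).edges
  · obtain ⟨u, w, h, hu⟩ := (contr_mem_edges hG hS h0).1 he
    rw [(contr_ends hG hS h0 h hu).mem_cut hT1, h.mem_cut (hT.trans hS)]
    have h1 : v0 ∉ T := fun h => h0 (hT h)
    split_ifs with hw
    · rfl
    · have h2 : w ∉ T := fun h => hw (hT h)
      simp [h1, h2]
  · constructor
    · intro h; exact (he (mem_filter.1 h).1).elim
    · intro h
      obtain ⟨u, w, h, hu, -⟩ := mem_cut_imp hG (hT.trans hS) h
      exact (he ((contr_mem_edges hG hS h0).2 ⟨u, w, h, hT hu⟩)).elim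

lemma contr_conn (hG : G.Cub) (hc : G.Conn2) (hS : S ⊆ G.V) (h0 : v0 ∉ S) (h0V : v0 ∈ G.V)
    (h3 : (G.cut S).card = 3) : (G.contr S v0).Conn2 := by
  have key : ∀ T ⊆ S, T.Nonempty → 2 ≤ ((G.contr S v0).cut T).card := by
    intro T hT hn
    rw [contr_cut hG hS h0 hT]
    exact hc T (hT.trans hS) hn (by rintro rfl; exact h0 (hT h0V))
  intro T hT hn hne
  by_cases hv : v0 ∈ T
  · rw [← cut_compl (contr_cub hG hS h0 h3) hT]
    apply key
    · intro x hx
      rw [mem_sdiff] at hx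
      rcases mem_insert.1 hx.1 with rfl | h
      · exact (hx.2 hv).elim
      · exact h
    · rw [nonempty_iff_ne_empty, Ne, sdiff_eq_empty_iff_subset]
      exact fun h => hne (hT.antisymm h)
  · apply key T _ hn
    intro x hx
    rcases mem_insert.1 (hT hx) with rfl | h
    · exact (hv hx).elim
    · exact h

lemma contr_ev (hG : G.Cub) (hS : S ⊆ G.V) (h0 : v0 ∉ S) {A : Finset E} (hA : G.IsEv A) :
    (G.contr S v0).IsEv (A ∩ (G.contr S v0).edges) := by
  refine ⟨inter_subset_right, fun v hv => ?_⟩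
  rw [inter_assoc, inter_eq_right.2 (inc_sub hv)]
  rcases mem_insert.1 hv with rfl | hv
  · rw [contr_inc0]
    exact hA.cut hS
  · rw [contr_inc h0 hv]
    exact hA.even v (hS hv)

lemma contr_planar (hG : G.Cub) (hc : G.Conn2) (hS : S ⊆ G.V) (h0 : v0 ∉ S) (h0V : v0 ∈ G.V)
    (h3 : (G.cut S).card = 3) {𝓕 : Finset (Finset E)} (h𝓕 : G.PlanarBy 𝓕) :
    ∃ 𝓕', (G.contr S v0).PlanarBy 𝓕' := by
  refine ⟨_, refine_planar (contr_cub hG hS h0 h3) (s := 𝓕)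
    (A := fun f => f ∩ (G.contr S v0).edges) ⟨?_, ?_⟩ ?_⟩
  · intro f hf
    exact contr_ev hG hS h0 (h𝓕.1.circ f hf).ev
  · intro e he
    rw [← h𝓕.1.two e (contr_edges_sub hG hS h0 he)]
    congr 1
    apply filter_congr
    intro f hf
    simp [he]
  · intro D hD hDe
    obtain ⟨T, hT, hDT⟩ := h𝓕.2 D (hD.trans (contr_edges_sub hG hS h0)) (fun f hf => by
      have := hDe f hf
      rwa [← inter_assoc, inter_right_comm, inter_eq_left.2 hD] at this)
    have key : ∀ A B : Finset α, A.Nonempty → B.Nonempty → Disjoint A B → A ∪ B = G.V \ S →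
        (∀ e ∈ D, ∀ u w, G.Ends e u w → u ∈ S ∨ w ∈ S) → 
        (∀ u ∈ A, ∀ w ∈ B, ∀ e, G.Ends e u w → e ∈ D) → False := by
      intro A B hA hB hdis hun hDS hDAB
      have hsub : ∀ x, x ∈ A ∨ x ∈ B ↔ x ∈ G.V ∧ x ∉ S := by
        intro x; rw [← mem_union, hun, mem_sdiff]
      have hAV : A ⊆ G.V := fun x hx => ((hsub x).1 (Or.inl hx)).1
      have hBV : B ⊆ G.V := fun x hx => ((hsub x).1 (Or.inr hx)).1
      rw [disjoint_left] at hdis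
      have h2A := hc A hAV hA (by
        rintro rfl
        obtain ⟨b, hb⟩ := hB
        exact hdis (hBV hb) hb)
      have h2B := hc B hBV hB (by
        rintro rfl
        obtain ⟨b, hb⟩ := hA
        exact hdis hb (hAV hb))
      have hno : ∀ e u w, G.Ends e u w → u ∈ A → w ∈ B → False := by
        intro e u w h hu hw
        have h1 := (hsub u).1 (Or.inl hu)
        have h2 := (hsub w).1 (Or.inr hw)
        have := hDS e (hDAB u hu w hw e h) u w h
        tauto
      have hcA : ∀ e ∈ G.cut A, ∃ u w, G.Ends e u w ∧ u ∈ A ∧ w ∈ S := by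
        intro e he
        obtain ⟨u, w, h, hu, hw⟩ := mem_cut_imp hG hAV he
        refine ⟨u, w, h, hu, ?_⟩
        by_contra hwS
        have := (hsub w).2 ⟨h.hw, hwS⟩
        exact hno e u w h hu (by tauto)
      have hcB : ∀ e ∈ G.cut B, ∃ u w, G.Ends e u w ∧ u ∈ B ∧ w ∈ S := by
        intro e he
        obtain ⟨u, w, h, hu, hw⟩ := mem_cut_imp hG hBV he
        refine ⟨u, w, h, hu, ?_⟩
        by_contra hwS
        have := (hsub w).2 ⟨h.hw, hwS⟩
        exact hno e w u h.symm (by tauto) hu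
      have hd : Disjoint (G.cut A) (G.cut B) := by
        rw [disjoint_left]
        intro e he he'
        obtain ⟨u, w, h, hu, hw⟩ := hcA e he
        obtain ⟨u', w', h', hu', hw'⟩ := hcB e he'
        have h1 := (hsub u).1 (Or.inl hu)
        rcases (h'.iff u h.hu).1 h.left with rfl | rfl
        · exact hdis hu hu'
        · exact h1.2 hw'
      have hs : G.cut A ∪ G.cut B ⊆ G.cut S := by
        intro e he
        rcases mem_union.1 he with he | he
        · obtain ⟨u, w, h, hu, hw⟩ := hcA e he
          rw [h.mem_cut hS]
          have h1 := (hsub u).1 (Or.inl hu)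
          tauto
        · obtain ⟨u, w, h, hu, hw⟩ := hcB e he
          rw [h.mem_cut hS]
          have h1 := (hsub u).1 (Or.inr hu)
          tauto
      have := card_le_card hs
      rw [card_union_of_disjoint hd] at this
      omega
    have hfin : ∀ T ⊆ G.V, D = G.cut T → (G.V \ S) ∩ T = ∅ →
        ∃ T' ⊆ (G.contr S v0).V, D = (G.contr S v0).cut T' := by
      intro T hT hD hdis
      have hTS : T ⊆ S := by
        intro x hx
        by_contra hxS
        have : x ∈ (G.V \ S) ∩ T := by simp [hx, hT hx, hxS]
        rw [hdis] at this; simp at this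
      exact ⟨T, hTS.trans (subset_insert _ _), by rw [contr_cut hG hS h0 hTS, hD]⟩
    rcases eq_empty_or_nonempty ((G.V \ S) ∩ T) with hA | hA
    · exact hfin T hT hDT hA
    rcases eq_empty_or_nonempty ((G.V \ S) \ T) with hB | hB
    · apply hfin (G.V \ T) sdiff_subset (by rw [cut_compl hG hT, hDT])
      ext x
      have : x ∉ (G.V \ S) \ T := by rw [hB]; simp
      simp only [mem_sdiff, mem_inter, notMem_empty] at this ⊢
      tauto
    · exfalso
      apply key _ _ hA hB
      · rw [disjoint_left]; intro x; simp only [mem_inter, mem_sdiff]; tauto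
      · ext x; simp only [mem_inter, mem_sdiff, mem_union]; tauto
      · intro e he u w h
        obtain ⟨u', w', h', hu'⟩ := (contr_mem_edges hG hS h0).1 (hD he)
        rcases (h.iff u' h'.hu).1 h'.left with rfl | rfl
        · exact Or.inl hu'
        · exact Or.inr hu'
      · intro u hu w hw e h
        rw [hDT, h.mem_cut hT]
        simp only [mem_inter, mem_sdiff] at hu hw
        tauto
end contr

structure Split (G G1 G2 : Gr α E) (δ : Finset E) : Prop where
  c1 : G1.Cub
  c2 : G2.Cub
  inter : ∀ e, e ∈ G1.edges ∧ e ∈ G2.edges ↔ e ∈ δ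
  union : ∀ e, e ∈ G1.edges ∨ e ∈ G2.edges ↔ e ∈ G.edges
  ev1 : ∀ X, G.IsEv X → G1.IsEv (X ∩ G1.edges)
  ev2 : ∀ X, G.IsEv X → G2.IsEv (X ∩ G2.edges)
  glue : ∀ C D, G1.IsEv C → G2.IsEv D → C ∩ δ = D ∩ δ → G.IsEv (C ∪ D)
  v1 : ∃ v ∈ G1.V, G1.inc v = δ
  v2 : ∃ v ∈ G2.V, G2.inc v = δ

lemma Split.symm {G G1 G2 : Gr α E} {δ : Finset E} (h : Split G G1 G2 δ) : Split G G2 G1 δ :=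
  ⟨h.c2, h.c1, fun e => by rw [← h.inter]; tauto, fun e => by rw [← h.union]; tauto, h.ev2, h.ev1,
    fun C D hC hD hCD => by rw [union_comm]; exact h.glue D C hD hC hCD.symm, h.v2, h.v1⟩

open scoped Classical in
noncomputable def glueF (G G1 G2 : Gr α E) (𝒞₁ 𝒞₂ : Finset (Finset E)) : Finset (Finset E) :=
  G.edges.powerset.filter (fun X => G.Circ X ∧ (X ∩ G1.edges ∈ 𝒞₁ ∨ X ∩ G1.edges = ∅) ∧
    (X ∩ G2.edges ∈ 𝒞₂ ∨ X ∩ G2.edges = ∅))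

lemma mem_glueF {G G1 G2 : Gr α E} {𝒞₁ 𝒞₂ : Finset (Finset E)} {X : Finset E} :
    X ∈ glueF G G1 G2 𝒞₁ 𝒞₂ ↔ G.Circ X ∧ (X ∩ G1.edges ∈ 𝒞₁ ∨ X ∩ G1.edges = ∅) ∧
    (X ∩ G2.edges ∈ 𝒞₂ ∨ X ∩ G2.edges = ∅) := by
  simp only [glueF, mem_filter, mem_powerset, and_iff_right_iff_imp]
  exact fun h => h.1.ev.sub

lemma glueF_symm {G G1 G2 : Gr α E} {𝒞₁ 𝒞₂ : Finset (Finset E)} :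
    glueF G G1 G2 𝒞₁ 𝒞₂ = glueF G G2 G1 𝒞₂ 𝒞₁ := by
  ext X; rw [mem_glueF, mem_glueF]; tauto

lemma isEv_empty : G.IsEv ∅ := ⟨by simp, by simp⟩

section split
variable {G1 G2 : Gr α E} {δ : Finset E}

lemma Split.circ_of_disj (h : Split G G1 G2 δ) {C : Finset E} (hC : G1.Circ C) (hd : C ∩ δ = ∅) :
    G.Circ C := by
  refine ⟨?_, hC.ne, ?_⟩
  · have := h.glue C ∅ hC.ev isEv_empty (by simp [hd])
    simpa using this
  · intro Y hY hYe hYn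
    have := h.ev1 Y hYe
    rw [inter_eq_left.2 (hY.trans hC.ev.sub)] at this
    exact hC.min Y hY this hYn

lemma Split.inter1 (h : Split G G1 G2 δ) {C D : Finset E} (hC : G1.IsEv C) (hD : G2.IsEv D)
    (hCD : C ∩ δ = D ∩ δ) : (C ∪ D) ∩ G1.edges = C := by
  ext e
  have h1 : e ∈ C ∩ δ ↔ e ∈ D ∩ δ := by rw [hCD]
  have h2 := h.inter e
  have h3 := @hC.sub e
  have h4 := @hD.sub e
  simp only [mem_inter, mem_union] at h1 ⊢
  tauto

lemma Split.circ_union (h : Split G G1 G2 δ) {C D : Finset E} (hC : G1.Circ C) (hD : G2.Circ D)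
    (hCD : C ∩ δ = D ∩ δ) (hn : (C ∩ δ).Nonempty) : G.Circ (C ∪ D) := by
  refine ⟨h.glue C D hC.ev hD.ev hCD, hC.ne.mono subset_union_left, ?_⟩
  intro Y hY hYe hYn
  have hY1 : Y ∩ G1.edges ⊆ C := by
    rw [← h.inter1 hC.ev hD.ev hCD]; exact inter_subset_inter_right hY
  have hY2 : Y ∩ G2.edges ⊆ D := by
    rw [← h.symm.inter1 hD.ev hC.ev hCD.symm, union_comm D C]; exact inter_subset_inter_right hY
  have h1 := hC.min _ hY1 (h.ev1 Y hYe)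
  have h2 := hD.min _ hY2 (h.ev2 Y hYe)
  obtain ⟨d, hd⟩ := hn
  have hdD : d ∈ D ∩ δ := hCD ▸ hd
  rw [mem_inter] at hd hdD
  have hd12 := (h.inter d).2 hd.2
  have hYd : d ∈ Y := by
    obtain ⟨y, hy⟩ := hYn
    rcases (h.union y).2 (hYe.sub hy) with hy' | hy'
    · have := h1 ⟨y, by simp [hy, hy']⟩
      have h3 : d ∈ Y ∩ G1.edges := by rw [this]; exact hd.1
      exact (mem_inter.1 h3).1
    · have := h2 ⟨y, by simp [hy, hy']⟩
      have h3 : d ∈ Y ∩ G2.edges := by rw [this]; exact hdD.1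
      exact (mem_inter.1 h3).1
  have e1 := h1 ⟨d, by simp [hYd, hd12]⟩
  have e2 := h2 ⟨d, by simp [hYd, hd12]⟩
  apply hY.antisymm
  apply union_subset
  · rw [← e1]; exact inter_subset_left
  · rw [← e2]; exact inter_subset_left

lemma pair_of_ev (hG : G.Cub) {v : α} (hv : v ∈ G.V) {C : Finset E} (hC : G.IsEv C)
    {a b : E} (ha : a ∈ C) (hb : b ∈ C) (ha' : a ∈ G.inc v) (hb' : b ∈ G.inc v) (hab : a ≠ b) :
    C ∩ G.inc v = {a, b} := by
  symm
  apply eq_of_subset_of_card_le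
  · intro x; simp only [mem_insert, mem_singleton, mem_inter]
    rintro (rfl | rfl) <;> tauto
  · rw [card_pair hab]
    have h1 := hC.even v hv
    have h2 : (C ∩ G.inc v).card ≤ 3 := hG.three v hv ▸ card_le_card inter_subset_right
    obtain ⟨k, hk⟩ := h1
    omega

lemma other_of_ev {v : α} (hv : v ∈ G.V) {C : Finset E} (hC : G.IsEv C)
    {a : E} (ha : a ∈ C) (ha' : a ∈ G.inc v) : ∃ b ∈ C, b ∈ G.inc v ∧ a ≠ b := by
  have h1 := hC.even v hv
  have h2 : 0 < (C ∩ G.inc v).card := card_pos.2 ⟨a, by simp [ha, ha']⟩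
  obtain ⟨b, hb, hba⟩ := exists_mem_ne (s := C ∩ G.inc v) (by obtain ⟨k, hk⟩ := h1; omega) a
  rw [mem_inter] at hb
  exact ⟨b, hb.1, hb.2, hba.symm⟩

lemma Split.exists_unique (h : Split G G1 G2 δ) {𝒞₁ 𝒞₂ : Finset (Finset E)} (h1 : G1.CDC 𝒞₁)
    (h2 : G2.CDC 𝒞₂) {C : Finset E} (hC : C ∈ 𝒞₁) :
    ∃ X ∈ glueF G G1 G2 𝒞₁ 𝒞₂, X ∩ G1.edges = C ∧
      ∀ Y ∈ glueF G G1 G2 𝒞₁ 𝒞₂, Y ∩ G1.edges = C → Y = X := by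
  have hCc := h1.circ C hC
  rcases eq_empty_or_nonempty (C ∩ δ) with hd | ⟨a, ha⟩
  · have hcirc := h.circ_of_disj hCc hd
    refine ⟨C, mem_glueF.2 ⟨hcirc, ?_, ?_⟩, inter_eq_left.2 hCc.ev.sub, ?_⟩
    · rw [inter_eq_left.2 hCc.ev.sub]; exact Or.inl hC
    · right
      ext e
      have h3 := h.inter e
      have h4 := @hCc.ev.sub e
      have h5 : e ∉ C ∩ δ := by rw [hd]; simp
      simp only [mem_inter, notMem_empty] at h5 ⊢
      tauto
    · intro Y hY hYC
      exact ((mem_glueF.1 hY).1.min C (hYC ▸ inter_subset_left) hcirc.ev hCc.ne).symm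
  · obtain ⟨v, hv, hvδ⟩ := h.v1
    obtain ⟨w, hw, hwδ⟩ := h.v2
    rw [mem_inter] at ha
    obtain ⟨b, hb, hbδ, hab⟩ := other_of_ev hv hCc.ev ha.1 (by rw [hvδ]; exact ha.2)
    have hCδ := pair_of_ev h.c1 hv hCc.ev ha.1 hb (by rw [hvδ]; exact ha.2) hbδ hab
    rw [hvδ] at hbδ hCδ
    have hu := pair_unique h.c2 h2.cover hw (a := a) (b := b) (by rw [hwδ]; exact ha.2)
      (by rw [hwδ]; exact hbδ) hab
    obtain ⟨D, hD⟩ := card_eq_one.1 hu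
    have hDm : ∀ D', D' ∈ 𝒞₂ ∧ a ∈ D' ∧ b ∈ D' ↔ D' = D := by
      intro D'
      have : D' ∈ 𝒞₂.filter (fun i => a ∈ id i ∧ b ∈ id i) ↔ D' ∈ ({D} : Finset (Finset E)) := by
        rw [hD]
      simpa using this
    obtain ⟨hD2, haD, hbD⟩ := (hDm D).2 rfl
    have hDc := h2.circ D hD2
    have hDδ := pair_of_ev h.c2 hw hDc.ev haD hbD (by rw [hwδ]; exact ha.2)
      (by rw [hwδ]; exact hbδ) hab
    rw [hwδ] at hDδ
    have hCD : C ∩ δ = D ∩ δ := by rw [hCδ, hDδ]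
    have i1 := h.inter1 hCc.ev hDc.ev hCD
    have i2 := h.symm.inter1 hDc.ev hCc.ev hCD.symm
    rw [union_comm] at i2
    refine ⟨C ∪ D, mem_glueF.2 ⟨h.circ_union hCc hDc hCD (by rw [hCδ]; simp), ?_, ?_⟩, i1, ?_⟩
    · rw [i1]; exact Or.inl hC
    · rw [i2]; exact Or.inl hD2
    · intro Y hY hYC
      rw [mem_glueF] at hY
      have haY : a ∈ Y ∩ G1.edges := by rw [hYC]; exact ha.1
      have hbY : b ∈ Y ∩ G1.edges := by rw [hYC]; exact hb
      have haY' : a ∈ Y ∩ G2.edges :=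
        mem_inter.2 ⟨(mem_inter.1 haY).1, ((h.inter a).2 ha.2).2⟩
      have hbY' : b ∈ Y ∩ G2.edges :=
        mem_inter.2 ⟨(mem_inter.1 hbY).1, ((h.inter b).2 hbδ).2⟩
      have hY2 : Y ∩ G2.edges ∈ 𝒞₂ := by
        rcases hY.2.2 with h' | h'
        · exact h'
        · rw [h'] at haY'; simp at haY'
      have := (hDm _).1 ⟨hY2, haY', hbY'⟩
      rw [← hYC, ← this]
      ext e
      have h3 := h.union e
      have h4 := @hY.1.ev.sub e
      simp only [mem_union, mem_inter]
      tauto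

lemma Split.count (h : Split G G1 G2 δ) {𝒞₁ 𝒞₂ : Finset (Finset E)} (h1 : G1.CDC 𝒞₁)
    (h2 : G2.CDC 𝒞₂) {e : E} (he : e ∈ G1.edges) :
    ((glueF G G1 G2 𝒞₁ 𝒞₂).filter (fun X => e ∈ X)).card = 2 := by
  rw [← h1.two e he]
  have hmem : ∀ X ∈ (glueF G G1 G2 𝒞₁ 𝒞₂).filter (fun X => e ∈ X), X ∩ G1.edges ∈ 𝒞₁ := by
    intro X hX
    rw [mem_filter] at hX
    rcases (mem_glueF.1 hX.1).2.1 with h' | h'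
    · exact h'
    · have : e ∈ X ∩ G1.edges := by simp [hX.2, he]
      rw [h'] at this; simp at this
  apply card_bij (fun X _ => X ∩ G1.edges)
  · intro X hX
    rw [mem_filter]
    exact ⟨hmem X hX, by simp [(mem_filter.1 hX).2, he]⟩
  · intro X hX Y hY hXY
    obtain ⟨Z, -, -, hZ⟩ := h.exists_unique h1 h2 (hmem X hX)
    rw [hZ X (mem_filter.1 hX).1 rfl, hZ Y (mem_filter.1 hY).1 hXY.symm]
  · intro C hC
    rw [mem_filter] at hC
    obtain ⟨X, hX, hXC, -⟩ := h.exists_unique h1 h2 hC.1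
    refine ⟨X, mem_filter.2 ⟨hX, ?_⟩, hXC⟩
    rw [← hXC] at hC
    exact (mem_inter.1 hC.2).1

lemma Split.cdc (h : Split G G1 G2 δ) {𝒞₁ 𝒞₂ : Finset (Finset E)} (h1 : G1.CDC 𝒞₁)
    (h2 : G2.CDC 𝒞₂) : G.CDC (glueF G G1 G2 𝒞₁ 𝒞₂) := by
  refine ⟨fun C hC => (mem_glueF.1 hC).1, fun e he => ?_⟩
  rcases (h.union e).2 he with he | he
  · exact h.count h1 h2 he
  · rw [glueF_symm]; exact h.symm.count h2 h1 he

lemma Split.sub (h : Split G G1 G2 δ) {𝒞₁ 𝒞₂ 𝒞₁' 𝒞₂' : Finset (Finset E)} (h1 : G1.CDC 𝒞₁)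
    (h2 : G2.CDC 𝒞₂) (heq : glueF G G1 G2 𝒞₁ 𝒞₂ = glueF G G1 G2 𝒞₁' 𝒞₂') : 𝒞₁ ⊆ 𝒞₁' := by
  intro C hC
  obtain ⟨X, hX, hXC, -⟩ := h.exists_unique h1 h2 hC
  rw [heq, mem_glueF] at hX
  rcases hX.2.1 with h' | h'
  · rwa [hXC] at h'
  · have := (h1.circ C hC).ne
    rw [← hXC, h'] at this; simp at this

lemma Split.nu (h : Split G G1 G2 δ) : G1.nu * G2.nu ≤ G.nu := by
  classical
  unfold Gr.nu
  rw [← card_product]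
  apply card_le_card_of_injOn (fun p => glueF G G1 G2 p.1 p.2)
  · rintro ⟨a, b⟩ hp
    simp only [coe_product, Set.mem_prod, mem_coe, mem_cdcs] at hp ⊢
    exact h.cdc hp.1 hp.2
  · rintro ⟨a, b⟩ hp ⟨a', b'⟩ hp' heq
    simp only [coe_product, Set.mem_prod, mem_coe, mem_cdcs] at hp hp' heq
    have e1 := (h.sub hp.1 hp.2 heq).antisymm (h.sub hp'.1 hp'.2 heq.symm)
    have heq' := heq
    rw [glueF_symm, glueF_symm (𝒞₁ := a')] at heq'
    have e2 := (h.symm.sub hp.2 hp.1 heq').antisymm (h.symm.sub hp'.2 hp'.1 heq'.symm)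
    rw [e1, e2]
end split

lemma split_contr (hG : G.Cub) {S : Finset α} (hS : S ⊆ G.V) {u0 v0 : α} (hu : u0 ∈ S)
    (hv : v0 ∈ G.V) (hv' : v0 ∉ S) (h3 : (G.cut S).card = 3) :
    Split G (G.contr S v0) (G.contr (G.V \ S) u0) (G.cut S) := by
  have hS' : G.V \ S ⊆ G.V := sdiff_subset
  have hu' : u0 ∉ G.V \ S := by simp [hu]
  have hc := cut_compl hG hS
  have hends : ∀ e u w, G.Ends e u w →
      (e ∈ (G.contr S v0).edges ↔ u ∈ S ∨ w ∈ S) ∧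
      (e ∈ (G.contr (G.V \ S) u0).edges ↔ u ∉ S ∨ w ∉ S) := by
    intro e u w h
    rw [contr_mem_edges hG hS hv', contr_mem_edges hG hS' hu']
    have hh : ∀ P : α → Prop, (∃ u' w', G.Ends e u' w' ∧ P u') ↔ P u ∨ P w := by
      intro P
      constructor
      · rintro ⟨u', w', h', hP⟩
        rcases (h.iff u' h'.hu).1 h'.left with rfl | rfl
        · exact Or.inl hP
        · exact Or.inr hP
      · rintro (hP | hP)
        · exact ⟨u, w, h, hP⟩
        · exact ⟨w, u, h.symm, hP⟩
    rw [hh (· ∈ S), hh (· ∈ G.V \ S)]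
    simp [h.hu, h.hw]
  have hin : ∀ e, e ∈ (G.contr S v0).edges ∧ e ∈ (G.contr (G.V \ S) u0).edges ↔ e ∈ G.cut S := by
    intro e
    by_cases he : e ∈ G.edges
    · obtain ⟨u, w, h⟩ := exists_ends hG he
      rw [(hends e u w h).1, (hends e u w h).2, h.mem_cut hS]
      tauto
    · constructor
      · intro h; exact (he (contr_edges_sub hG hS hv' h.1)).elim
      · intro h; exact (he (mem_filter.1 h).1).elim
  refine ⟨contr_cub hG hS hv' h3, contr_cub hG hS' hu' (by rw [hc, h3]), hin, ?_, ?_, ?_, ?_, ?_, ?_⟩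
  · intro e
    constructor
    · rintro (h | h)
      · exact contr_edges_sub hG hS hv' h
      · exact contr_edges_sub hG hS' hu' h
    · intro he
      obtain ⟨u, w, h⟩ := exists_ends hG he
      rw [(hends e u w h).1, (hends e u w h).2]
      tauto
  · exact fun X hX => contr_ev hG hS hv' hX
  · exact fun X hX => contr_ev hG hS' hu' hX
  · intro C D hC hD hCD
    have hCDm : ∀ e, e ∈ G.cut S → (e ∈ C ↔ e ∈ D) := by
      intro e he
      have : e ∈ C ∩ G.cut S ↔ e ∈ D ∩ G.cut S := by rw [hCD]
      simpa [he] using this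
    refine ⟨union_subset (hC.sub.trans (contr_edges_sub hG hS hv'))
      (hD.sub.trans (contr_edges_sub hG hS' hu')), fun v hv0 => ?_⟩
    by_cases hvS : v ∈ S
    · have h1 := hC.even v (mem_insert_of_mem hvS)
      rw [contr_inc hv' hvS] at h1
      convert h1 using 2
      ext e
      simp only [mem_inter, mem_union]
      have h2 : e ∈ G.inc v → e ∈ (G.contr S v0).edges := fun he =>
        inc_sub (mem_insert_of_mem hvS) (by rw [contr_inc hv' hvS]; exact he)
      have h3 := @hD.sub e
      have h4 := hCDm e
      have h5 := hin e
      constructor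
      · rintro ⟨hc | hd, hi⟩
        · exact ⟨hc, hi⟩
        · exact ⟨(h4 (h5.1 ⟨h2 hi, h3 hd⟩)).2 hd, hi⟩
      · rintro ⟨hc, hi⟩
        exact ⟨Or.inl hc, hi⟩
    · have hvS' : v ∈ G.V \ S := by simp [hvS, hv0]
      have h1 := hD.even v (mem_insert_of_mem hvS')
      rw [contr_inc hu' hvS'] at h1
      convert h1 using 2
      ext e
      simp only [mem_inter, mem_union]
      have h2 : e ∈ G.inc v → e ∈ (G.contr (G.V \ S) u0).edges := fun he =>
        inc_sub (mem_insert_of_mem hvS') (by rw [contr_inc hu' hvS']; exact he)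
      have h3 := @hC.sub e
      have h4 := hCDm e
      have h5 := hin e
      constructor
      · rintro ⟨hc | hd, hi⟩
        · exact ⟨(h4 (h5.1 ⟨h3 hc, h2 hi⟩)).1 hc, hi⟩
        · exact ⟨hd, hi⟩
      · rintro ⟨hc, hi⟩
        exact ⟨Or.inr hc, hi⟩
  · exact ⟨v0, mem_insert_self _ _, contr_inc0⟩
  · exact ⟨u0, mem_insert_self _ _, by rw [contr_inc0, hc]⟩

end Gr
end CiDC

namespace CiDC
open Finset
set_option linter.unusedSectionVars false
set_option linter.unusedVariables false
namespace Gr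

variable {α E : Type*} [DecidableEq α] [DecidableEq E] {G : Gr α E}

lemma cut_empty : G.cut ∅ = ∅ := by
  simp [cut]

lemma cut_univ (hG : G.Cub) : G.cut G.V = ∅ := by
  rw [← cut_compl hG (Subset.refl _)]; simp [cut_empty]

lemma cut_single {v : α} (hv : v ∈ G.V) : G.cut {v} = G.inc v := by
  ext e
  rw [cut, mem_filter, filter_singleton]
  by_cases h : e ∈ G.inc v
  · simp [h, inc_sub hv h]
  · simp [h]

/-- essentially 4-connected type hypothesis -/
structure Base (G : Gr α E) : Prop where
  cub : G.Cub
  conn : G.Conn2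
  h2 : ∀ S ⊆ G.V, (G.cut S).card ≠ 2
  h3 : ∀ S ⊆ G.V, (G.cut S).card = 3 → ∃ v ∈ G.V, G.cut S = G.inc v

lemma even_V (hG : G.Cub) : Even G.V.card := by
  rw [← cut_parity hG (Subset.refl _), cut_univ hG]; simp

lemma h3_of (hG : G.Cub) (hno : ¬ ∃ S ⊆ G.V, (G.cut S).card = 3 ∧ 2 ≤ S.card ∧ 2 ≤ (G.V \ S).card) :
    ∀ S ⊆ G.V, (G.cut S).card = 3 → ∃ v ∈ G.V, G.cut S = G.inc v := by
  have key : ∀ S ⊆ G.V, (G.cut S).card = 3 → S.card ≤ 1 → ∃ v ∈ G.V, G.cut S = G.inc v := by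
    intro S hS h h1
    interval_cases hk : S.card
    · rw [card_eq_zero.1 hk, cut_empty] at h; simp at h
    · obtain ⟨v, rfl⟩ := card_eq_one.1 hk
      have hv : v ∈ G.V := hS (by simp)
      exact ⟨v, hv, cut_single hv⟩
  intro S hS h
  by_cases h1 : S.card ≤ 1
  · exact key S hS h h1
  · rw [← cut_compl hG hS] at h ⊢
    apply key _ sdiff_subset h
    by_contra h2
    exact hno ⟨S, hS, by rw [← cut_compl hG hS]; exact h, by omega, by omega⟩

lemma no2_aux (hG : G.Cub) (hc : G.Conn2) {S : Finset α} (hS : S ⊆ G.V) (h2 : (G.cut S).card = 2)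
    (h3 : 3 ≤ (G.V \ S).card) (hSn : 1 ≤ S.card) :
    ∃ S ⊆ G.V, (G.cut S).card = 3 ∧ 2 ≤ S.card ∧ 2 ≤ (G.V \ S).card := by
  obtain ⟨e, he⟩ : (G.cut S).Nonempty := card_pos.1 (by omega)
  obtain ⟨x, y, hxy, hx, hy⟩ := mem_cut_imp hG hS he
  have hT : insert y S ⊆ G.V := insert_subset hxy.hw hS
  have hcard : (insert y S).card = S.card + 1 := card_insert_of_notMem hy
  have hcard2 : (G.V \ insert y S).card + 1 = (G.V \ S).card := by
    rw [card_sdiff_of_subset hT, card_sdiff_of_subset hS, hcard]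
    have := card_le_card hT
    omega
  refine ⟨insert y S, hT, ?_, by omega, by omega⟩
  have hp := cut_parity hG hT
  have hp' := cut_parity hG hS
  have hge := hc _ hT ⟨y, by simp⟩ (by
    intro h
    rw [h, sdiff_self] at hcard2
    simp at hcard2
    omega)
  have hle : (G.cut (insert y S)).card ≤ 3 := by
    have hsub : G.cut (insert y S) ⊆ (G.cut S).erase e ∪ (G.inc y).erase e := by
      intro d hd
      obtain ⟨u, w, h, hu, hw⟩ := mem_cut_imp hG hT hd
      have hde : d ≠ e := by
        rintro rfl
        have := (hxy.mem_cut hT).1 hd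
        simp [hx] at this
      simp only [mem_union, mem_erase]
      rcases mem_insert.1 hu with rfl | hu
      · exact Or.inr ⟨hde, h.left⟩
      · refine Or.inl ⟨hde, (h.mem_cut hS).2 ?_⟩
        have : w ∉ S := fun h => hw (mem_insert_of_mem h)
        tauto
    have h4 := (card_le_card hsub).trans (card_union_le _ _)
    rw [card_erase_of_mem he, card_erase_of_mem hxy.right, hG.three y hxy.hw] at h4
    omega
  rw [hcard] at hp
  have : (G.cut (insert y S)).card ≠ 2 := by
    intro h
    rw [h] at hp
    rw [h2] at hp'
    have h5 : Even 2 := by decide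
    have := hp'.1 h5
    have h6 := hp.1 h5
    rw [Nat.even_add_one] at h6
    exact h6 this
  omega

lemma no2 (hG : G.Cub) (hc : G.Conn2) (hn : 6 ≤ G.V.card)
    (hno : ¬ ∃ S ⊆ G.V, (G.cut S).card = 3 ∧ 2 ≤ S.card ∧ 2 ≤ (G.V \ S).card) :
    ∀ S ⊆ G.V, (G.cut S).card ≠ 2 := by
  intro S hS h2
  have hcs := card_sdiff_add_card_eq_card hS
  have h1 : 1 ≤ S.card := by
    by_contra h
    have : S = ∅ := card_eq_zero.1 (by omega)
    rw [this, cut_empty] at h2; simp at h2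
  have h1' : 1 ≤ (G.V \ S).card := by
    by_contra h
    have : G.V \ S = ∅ := card_eq_zero.1 (by omega)
    rw [← cut_compl hG hS, this, cut_empty] at h2; simp at h2
  by_cases h3 : 3 ≤ (G.V \ S).card
  · exact hno (no2_aux hG hc hS h2 h3 h1)
  · apply hno
    apply no2_aux hG hc (S := G.V \ S) sdiff_subset
    · rw [cut_compl hG hS, h2]
    · rw [Finset.sdiff_sdiff_eq_self hS]; omega
    · exact h1'

lemma two_of_cut2 (hG : G.Cub) {𝓕 : Finset (Finset E)} (h𝓕 : G.CDC 𝓕) {S : Finset α}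
    (hS : S ⊆ G.V) (h2 : (G.cut S).card = 2) : 2 ≤ G.nu := by
  classical
  obtain ⟨e, e', hee, hcut⟩ := card_eq_two.1 h2
  have heS : e ∈ G.cut S := by rw [hcut]; simp
  have heS' : e' ∈ G.cut S := by rw [hcut]; simp
  have heE : e ∈ G.edges := (mem_filter.1 heS).1
  have hboth : ∀ f ∈ 𝓕, e ∈ f → e' ∈ f := by
    intro f hf hef
    by_contra h
    have := (h𝓕.circ f hf).ev.cut hS
    have h1 : f ∩ G.cut S = {e} := by
      rw [hcut]; ext x; simp only [mem_inter, mem_insert, mem_singleton]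
      constructor
      · rintro ⟨h1, rfl | rfl⟩
        · rfl
        · exact (h h1).elim
      · rintro rfl; exact ⟨hef, Or.inl rfl⟩
    rw [h1] at this; simp at this
  obtain ⟨f, g, hfg, hfil⟩ := card_eq_two.1 (h𝓕.two e heE)
  have hmem : ∀ h, (h ∈ 𝓕 ∧ e ∈ h) ↔ h = f ∨ h = g := by
    intro h
    have : h ∈ 𝓕.filter (fun C => e ∈ C) ↔ h ∈ ({f, g} : Finset (Finset E)) := by rw [hfil]
    simpa only [mem_filter, mem_insert, mem_singleton] using this
  obtain ⟨hf, hef⟩ := (hmem f).2 (Or.inl rfl)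
  obtain ⟨hg, heg⟩ := (hmem g).2 (Or.inr rfl)
  have hef' := hboth f hf hef
  have heg' := hboth g hg heg
  -- edges inside S
  let ES : Finset E := (S.biUnion G.inc) \ G.cut S
  let A : Finset E → Finset E := fun h => (h \ ES) ∪ (Equiv.swap f g h ∩ ES)
  have hsw : ∀ h ∈ 𝓕, Equiv.swap f g h ∈ 𝓕 := by
    intro h hh
    rw [Equiv.swap_apply_def]; split_ifs <;> assumption
  have hδ : ∀ x ∈ G.cut S, ∀ h ∈ 𝓕, (x ∈ Equiv.swap f g h ↔ x ∈ h) := by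
    intro x hx h hh
    rw [hcut, mem_insert, mem_singleton] at hx
    rw [Equiv.swap_apply_def]
    split_ifs with h1 h1
    · subst h1; rcases hx with rfl | rfl <;> tauto
    · subst h1; rcases hx with rfl | rfl <;> tauto
    · rfl
  have hA : G.EvCover 𝓕 A := by
    constructor
    · intro h hh
      have hev := (h𝓕.circ h hh).ev
      have hev' := (h𝓕.circ _ (hsw h hh)).ev
      refine ⟨union_subset (sdiff_subset.trans hev.sub) (inter_subset_left.trans hev'.sub), ?_⟩
      intro v hv
      by_cases hvS : v ∈ S
      · convert hev'.even v hv using 2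
        ext x
        simp only [A, ES, mem_inter, mem_union, mem_sdiff, mem_biUnion]
        have h1 : x ∈ G.inc v → ∃ a ∈ S, x ∈ G.inc a := fun h => ⟨v, hvS, h⟩
        have h2 := hδ x
        by_cases hxc : x ∈ G.cut S
        · have h2 := hδ x hxc h hh
          simp only [hxc, not_true_eq_false, and_false, not_false_eq_true, and_true, or_false]
          rw [h2]
        · simp only [hxc, not_false_eq_true, and_true]
          constructor
          · rintro ⟨h3 | h3, h4⟩
            · exact (h3.2 (h1 h4)).elim
            · exact ⟨h3.1, h4⟩
          · rintro ⟨h3, h4⟩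
            exact ⟨Or.inr ⟨h3, h1 h4⟩, h4⟩
      · convert hev.even v hv using 2
        ext x
        have h1 : x ∈ G.inc v → x ∉ ES := by
          intro hx hxE
          simp only [ES, mem_sdiff, mem_biUnion] at hxE
          obtain ⟨⟨a, ha, hxa⟩, hxc⟩ := hxE
          obtain ⟨w, hw⟩ := exists_ends' hG hv hx
          rw [hw.mem_cut hS] at hxc
          rcases (hw.iff a (hS ha)).1 hxa with rfl | rfl <;> tauto
        simp only [A, mem_inter, mem_union, mem_sdiff]
        tauto
    · intro x hx
      by_cases hxE : x ∈ ES
      · rw [← h𝓕.two x hx]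
        apply card_bij (fun h _ => Equiv.swap f g h)
        · intro h hh
          simp only [A, mem_filter, mem_union, mem_sdiff, mem_inter] at hh ⊢
          exact ⟨hsw h hh.1, by tauto⟩
        · intro a _ b _ hab
          exact (Equiv.swap f g).injective hab
        · intro h hh
          refine ⟨Equiv.swap f g h, ?_, by simp⟩
          simp only [A, mem_filter, mem_union, mem_sdiff, mem_inter, Equiv.swap_apply_self] at hh ⊢
          exact ⟨hsw h hh.1, by tauto⟩
      · rw [← h𝓕.two x hx]
        congr 1
        ext h
        simp only [A, mem_filter, mem_union, mem_sdiff, mem_inter]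
        tauto
  have hcdc := refine_cdc hG hA
  have hne : 𝓕 ≠ G.refine 𝓕 A := by
    intro heq
    have hfR : f ∈ G.refine 𝓕 A := heq ▸ hf
    simp only [refine, mem_biUnion, mem_comps] at hfR
    obtain ⟨h, hh, hfA, -⟩ := hfR
    have heES : e ∉ ES := by simp [ES, heS]
    have heh : e ∈ h := by
      have := hfA hef
      simp only [A, mem_union, mem_sdiff, mem_inter] at this
      tauto
    obtain ⟨v, w, hvw, hv, hw⟩ := mem_cut_imp hG hS heS
    have hnot : ∀ v ∈ G.V, e ∈ G.inc v → ∃ a ∈ f, a ∈ G.inc v ∧ a ∉ g := by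
      intro v hv hev
      obtain ⟨a, ha, hav, hae⟩ := other_of_ev hv (h𝓕.circ f hf).ev hef hev
      refine ⟨a, ha, hav, fun hag => ?_⟩
      have hu := pair_unique hG h𝓕.cover hv hev hav hae
      have hs : ({f, g} : Finset (Finset E)) ⊆ 𝓕.filter (fun i => e ∈ id i ∧ a ∈ id i) := by
        intro x hx
        simp only [mem_insert, mem_singleton] at hx
        rcases hx with rfl | rfl
        · simp [hf, hef, ha]
        · simp [hg, heg, hag]
      have := card_le_card hs
      rw [card_pair hfg, hu] at this
      omega
    rcases (hmem h).1 ⟨hh, heh⟩ with rfl | rfl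
    · obtain ⟨a, ha, hav, hag⟩ := hnot v hvw.hu hvw.left
      have haE : a ∈ ES := by
        simp only [ES, mem_sdiff, mem_biUnion]
        refine ⟨⟨v, hv, hav⟩, ?_⟩
        rw [hcut, mem_insert, mem_singleton]
        rintro (rfl | rfl)
        · exact hag heg
        · exact hag heg'
      have := hfA ha
      simp only [A, mem_union, mem_sdiff, mem_inter, Equiv.swap_apply_left] at this
      tauto
    · obtain ⟨a, ha, hav, hag⟩ := hnot w hvw.hw hvw.right
      have haE : a ∉ ES := by
        simp only [ES, mem_sdiff, mem_biUnion]
        rintro ⟨⟨b, hb, hab⟩, hc⟩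
        obtain ⟨z, hz⟩ := exists_ends' hG hvw.hw hav
        rw [hz.mem_cut hS] at hc
        rcases (hz.iff b (hS hb)).1 hab with rfl | rfl <;> tauto
      have := hfA ha
      simp only [A, mem_union, mem_sdiff, mem_inter, Equiv.swap_apply_right] at this
      tauto
  have : ({𝓕, G.refine 𝓕 A} : Finset (Finset (Finset E))) ⊆ G.cdcs := by
    intro x hx
    simp only [mem_insert, mem_singleton] at hx
    rcases hx with rfl | rfl
    · exact mem_cdcs.2 h𝓕
    · exact mem_cdcs.2 hcdc
  have := card_le_card this
  rwa [card_pair hne] at this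

lemma contr_card {S : Finset α} {v0 : α} (h0 : v0 ∉ S) : (G.contr S v0).V.card = S.card + 1 := by
  simp [contr, h0]

theorem main_of_base
    (base : ∀ G : Gr α E, G.Base → ∀ 𝓕, G.PlanarBy 𝓕 → 4 ≤ G.V.card →
      (2 : ℝ) ^ (Real.sqrt G.V.card / 100) ≤ G.nu) :
    ∀ (n : ℕ) (G : Gr α E), G.V.card = n → G.Cub → G.Conn2 → ∀ 𝓕, G.PlanarBy 𝓕 → 4 ≤ n →
      (2 : ℝ) ^ (Real.sqrt n / 100) ≤ G.nu := by
  intro n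
  induction n using Nat.strong_induction_on with
  | _ n ih =>
  intro G hn hG hc 𝓕 h𝓕 h4
  by_cases hno : ∃ S ⊆ G.V, (G.cut S).card = 3 ∧ 2 ≤ S.card ∧ 2 ≤ (G.V \ S).card
  · obtain ⟨S, hS, h3, hS2, hS2'⟩ := hno
    have hcs := card_sdiff_add_card_eq_card hS
    have hodd : ∀ k, ¬ Even k → 2 ≤ k → 3 ≤ k := by
      rintro k hk h
      rcases Nat.lt_or_ge k 3 with h | h
      · exact (hk (by rw [show k = 2 by omega]; decide)).elim
      · exact h
    have n3 : ¬ Even 3 := by decide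
    have hS3 : 3 ≤ S.card := hodd _ (by rw [← cut_parity hG hS, h3]; exact n3) hS2
    have hS3' : 3 ≤ (G.V \ S).card :=
      hodd _ (by rw [← cut_parity hG sdiff_subset, cut_compl hG hS, h3]; exact n3) hS2'
    obtain ⟨u0, hu0⟩ : S.Nonempty := card_pos.1 (by omega)
    obtain ⟨v0, hv0⟩ : (G.V \ S).Nonempty := card_pos.1 (by omega)
    have hu0' : u0 ∉ G.V \ S := by simp [hu0]
    have hv0' := mem_sdiff.1 hv0
    have h3' : (G.cut (G.V \ S)).card = 3 := by rw [cut_compl hG hS, h3]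
    have hsp := (split_contr hG hS hu0 hv0'.1 hv0'.2 h3).nu
    obtain ⟨𝓕₁, h𝓕₁⟩ := contr_planar hG hc hS hv0'.2 hv0'.1 h3 h𝓕
    obtain ⟨𝓕₂, h𝓕₂⟩ := contr_planar hG hc sdiff_subset hu0' (hS hu0) h3' h𝓕
    have i1 := ih (S.card + 1) (by omega) _ (contr_card hv0'.2) (contr_cub hG hS hv0'.2 h3)
      (contr_conn hG hc hS hv0'.2 hv0'.1 h3) 𝓕₁ h𝓕₁ (by omega)
    have i2 := ih ((G.V \ S).card + 1) (by omega) _ (contr_card hu0')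
      (contr_cub hG sdiff_subset hu0' h3')
      (contr_conn hG hc sdiff_subset hu0' (hS hu0) h3') 𝓕₂ h𝓕₂ (by omega)
    have hprod : (2 : ℝ) ^ (Real.sqrt n / 100) ≤
        2 ^ (Real.sqrt ((S.card + 1 : ℕ)) / 100) * 2 ^ (Real.sqrt (((G.V \ S).card + 1 : ℕ)) / 100) := by
      rw [← Real.rpow_add (by norm_num)]
      apply Real.rpow_le_rpow_of_exponent_le (by norm_num)
      rw [← add_div]
      apply div_le_div_of_nonneg_right _ (by norm_num)
      apply Real.sqrt_le_iff.2
      have p1 := Real.sqrt_nonneg ((S.card + 1 : ℕ) : ℝ)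
      have p2 := Real.sqrt_nonneg (((G.V \ S).card + 1 : ℕ) : ℝ)
      have q1 := Real.sq_sqrt (Nat.cast_nonneg (α := ℝ) (S.card + 1))
      have q2 := Real.sq_sqrt (Nat.cast_nonneg (α := ℝ) ((G.V \ S).card + 1))
      refine ⟨by positivity, ?_⟩
      have : (n : ℝ) = (S.card : ℝ) + ((G.V \ S).card : ℝ) := by
        rw [← hn, ← hcs]; push_cast; ring
      push_cast at *
      nlinarith [mul_nonneg p1 p2]
    calc _ ≤ _ := hprod
      _ ≤ ((G.contr S v0).nu : ℝ) * ((G.contr (G.V \ S) u0).nu : ℝ) := by gcongr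
      _ ≤ _ := by exact_mod_cast hsp
  · by_cases h6 : 6 ≤ G.V.card
    · rw [← hn]
      exact base G ⟨hG, hc, no2 hG hc h6 hno, h3_of hG hno⟩ 𝓕 h𝓕 (by omega)
    · have hev := even_V hG
      have hV : G.V.card = 4 := by
        obtain ⟨k, hk⟩ := hev
        omega
      by_cases h2 : ∃ S ⊆ G.V, (G.cut S).card = 2
      · obtain ⟨S, hS, h2⟩ := h2
        have := two_of_cut2 hG h𝓕.1 hS h2
        have hn4 : n = 4 := by omega
        have h1 : (2 : ℝ) ^ (Real.sqrt n / 100) ≤ 2 ^ (1 : ℝ) := by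
          apply Real.rpow_le_rpow_of_exponent_le (by norm_num)
          rw [div_le_one (by norm_num)]
          apply Real.sqrt_le_iff.2
          rw [hn4]; norm_num
        rw [Real.rpow_one] at h1
        exact h1.trans (by exact_mod_cast this)
      · rw [← hn]
        push Not at h2
        exact base G ⟨hG, hc, h2, h3_of hG hno⟩ 𝓕 h𝓕 (by omega)

end Gr
end CiDC

namespace CiDC
open Finset
set_option linter.unusedSectionVars false
set_option linter.unusedVariables false
namespace Gr

variable {α E : Type*} [DecidableEq α] [DecidableEq E] {G : Gr α E} {𝓕 : Finset (Finset E)}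

/-- `f`, `g` are the two faces containing `e` -/
structure Fcs (𝓕 : Finset (Finset E)) (e : E) (f g : Finset E) : Prop where
  hf : f ∈ 𝓕
  hg : g ∈ 𝓕
  ne : f ≠ g
  iff : ∀ h ∈ 𝓕, (e ∈ h ↔ h = f ∨ h = g)

lemma Fcs.symm {e : E} {f g : Finset E} (h : Fcs 𝓕 e f g) : Fcs 𝓕 e g f :=
  ⟨h.hg, h.hf, h.ne.symm, fun x hx => by rw [h.iff x hx]; tauto⟩

lemma Fcs.left {e : E} {f g : Finset E} (h : Fcs 𝓕 e f g) : e ∈ f := (h.iff f h.hf).2 (Or.inl rfl)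
lemma Fcs.right {e : E} {f g : Finset E} (h : Fcs 𝓕 e f g) : e ∈ g := (h.iff g h.hg).2 (Or.inr rfl)

lemma exists_fcs (h𝓕 : G.CDC 𝓕) {e : E} (he : e ∈ G.edges) : ∃ f g, Fcs 𝓕 e f g := by
  obtain ⟨f, g, hfg, hfil⟩ := card_eq_two.1 (h𝓕.two e he)
  have hmem : ∀ h, (h ∈ 𝓕 ∧ e ∈ h) ↔ h = f ∨ h = g := by
    intro h
    have : h ∈ 𝓕.filter (fun C => e ∈ C) ↔ h ∈ ({f, g} : Finset (Finset E)) := by rw [hfil]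
    simpa only [mem_filter, mem_insert, mem_singleton] using this
  exact ⟨f, g, ((hmem f).2 (Or.inl rfl)).1, ((hmem g).2 (Or.inr rfl)).1, hfg,
    fun h hh => by rw [← hmem h]; tauto⟩

lemma fcs_of (h𝓕 : G.CDC 𝓕) {e : E} {f g : Finset E} (hf : f ∈ 𝓕) (hg : g ∈ 𝓕) (hne : f ≠ g)
    (hef : e ∈ f) (heg : e ∈ g) : Fcs 𝓕 e f g := by
  obtain ⟨x, y, h⟩ := exists_fcs h𝓕 ((h𝓕.circ f hf).ev.sub hef)
  have h1 := (h.iff f hf).1 hef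
  have h2 := (h.iff g hg).1 heg
  rcases h1 with rfl | rfl <;> rcases h2 with rfl | rfl
  · exact (hne rfl).elim
  · exact h
  · exact h.symm
  · exact (hne rfl).elim

lemma fcs_left (h𝓕 : G.CDC 𝓕) {e : E} {f : Finset E} (hf : f ∈ 𝓕) (hef : e ∈ f) :
    ∃ g, Fcs 𝓕 e f g := by
  obtain ⟨x, y, h⟩ := exists_fcs h𝓕 ((h𝓕.circ f hf).ev.sub hef)
  rcases (h.iff f hf).1 hef with rfl | rfl
  · exact ⟨y, h⟩
  · exact ⟨x, h.symm⟩

lemma face_inter_le (hB : G.Base) (hF : G.PlanarBy 𝓕) {f g : Finset E} (hf : f ∈ 𝓕) (hg : g ∈ 𝓕)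
    (hne : f ≠ g) {a b : E} (haf : a ∈ f) (hag : a ∈ g) (hbf : b ∈ f) (hbg : b ∈ g) : a = b := by
  by_contra hab
  have Fa := fcs_of hF.1 hf hg hne haf hag
  have Fb := fcs_of hF.1 hf hg hne hbf hbg
  obtain ⟨S, hS, hD⟩ := hF.2 {a, b} (by
    intro x hx; simp only [mem_insert, mem_singleton] at hx
    rcases hx with rfl | rfl
    · exact (hF.1.circ f hf).ev.sub haf
    · exact (hF.1.circ f hf).ev.sub hbf) (by
    intro h hh
    have h1 := Fa.iff h hh
    have h2 := Fb.iff h hh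
    rw [← filter_mem_eq_inter, filter_insert, filter_singleton]
    by_cases hc : h = f ∨ h = g
    · rw [if_pos (h1.2 hc), if_pos (h2.2 hc), card_pair hab]; decide
    · rw [if_neg (fun h => hc (h1.1 h)), if_neg (fun h => hc (h2.1 h))]; simp)
  apply hB.h2 S hS
  rw [← hD, card_pair hab]

lemma face_triple (hB : G.Base) (hF : G.PlanarBy 𝓕) {f g h : Finset E} (hf : f ∈ 𝓕) (hg : g ∈ 𝓕)
    (hh : h ∈ 𝓕) (hfg : f ≠ g) (hfh : f ≠ h) (hgh : g ≠ h) {a b c : E}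
    (haf : a ∈ f) (hag : a ∈ g) (hbg : b ∈ g) (hbh : b ∈ h) (hcf : c ∈ f) (hch : c ∈ h) :
    ∃ v ∈ G.V, G.inc v = {a, b, c} := by
  have Fa := fcs_of hF.1 hf hg hfg haf hag
  have Fb := fcs_of hF.1 hg hh hgh hbg hbh
  have Fc := fcs_of hF.1 hf hh hfh hcf hch
  have hab : a ≠ b := by
    rintro rfl
    rcases (Fa.iff h hh).1 hbh with rfl | rfl <;> tauto
  have hac : a ≠ c := by
    rintro rfl
    rcases (Fa.iff h hh).1 hch with rfl | rfl <;> tauto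
  have hbc : b ≠ c := by
    rintro rfl
    rcases (Fb.iff f hf).1 hcf with rfl | rfl <;> tauto
  have h3 : ({a, b, c} : Finset E).card = 3 := card_eq_three.2 ⟨a, b, c, hab, hac, hbc, rfl⟩
  obtain ⟨S, hS, hD⟩ := hF.2 {a, b, c} (by
    intro x hx; simp only [mem_insert, mem_singleton] at hx
    rcases hx with rfl | rfl | rfl
    · exact (hF.1.circ f hf).ev.sub haf
    · exact (hF.1.circ g hg).ev.sub hbg
    · exact (hF.1.circ f hf).ev.sub hcf) (by
    intro k hk
    have h1 := Fa.iff k hk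
    have h2 := Fb.iff k hk
    have h3 := Fc.iff k hk
    rw [← filter_mem_eq_inter, filter_insert, filter_insert, filter_singleton]
    by_cases c1 : k = f
    · have e1 : a ∈ k := h1.2 (Or.inl c1)
      have e3 : c ∈ k := h3.2 (Or.inl c1)
      have e2 : b ∉ k := by rw [h2, c1]; tauto
      rw [if_pos e1, if_neg e2, if_pos e3, card_pair hac]; decide
    by_cases c2 : k = g
    · have e1 : a ∈ k := h1.2 (Or.inr c2)
      have e2 : b ∈ k := h2.2 (Or.inl c2)
      have e3 : c ∉ k := by rw [h3, c2]; tauto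
      rw [if_pos e1, if_pos e2, if_neg e3, insert_empty_eq, card_pair hab]; decide
    by_cases c3 : k = h
    · have e2 : b ∈ k := h2.2 (Or.inr c3)
      have e3 : c ∈ k := h3.2 (Or.inr c3)
      have e1 : a ∉ k := by rw [h1, c3]; tauto
      rw [if_neg e1, if_pos e2, if_pos e3, card_pair hbc]; decide
    · rw [if_neg (by tauto), if_neg (by tauto), if_neg (by tauto)]; simp)
  obtain ⟨v, hv, h⟩ := hB.h3 S hS (by rw [← hD, h3])
  exact ⟨v, hv, by rw [← h, hD]⟩

/-- adjacency of faces -/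
def Adj (f g : Finset E) : Prop := f ≠ g ∧ (f ∩ g).Nonempty

instance (f g : Finset E) : Decidable (Adj f g) := by unfold Adj; infer_instance

lemma Adj.symm {f g : Finset E} (h : Adj f g) : Adj g f := ⟨h.1.symm, by rw [inter_comm]; exact h.2⟩

lemma Adj.edge {f g : Finset E} (h : Adj f g) : ∃ e, e ∈ f ∧ e ∈ g := by
  obtain ⟨e, he⟩ := h.2
  exact ⟨e, (mem_inter.1 he).1, (mem_inter.1 he).2⟩

lemma adj_of {f g : Finset E} {e : E} (h : f ≠ g) (hf : e ∈ f) (hg : e ∈ g) : Adj f g :=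
  ⟨h, e, mem_inter.2 ⟨hf, hg⟩⟩

/-- neighbouring faces -/
def Nb (𝓕 : Finset (Finset E)) (f : Finset E) : Finset (Finset E) := 𝓕.filter (Adj f)

lemma mem_Nb {f g : Finset E} : g ∈ Nb 𝓕 f ↔ g ∈ 𝓕 ∧ Adj f g := by simp [Nb]

/-- The face at the corner of `v` opposite to `e`. -/
lemma corner (hB : G.Base) (hF : G.PlanarBy 𝓕) {h g : Finset E} (hh : h ∈ 𝓕) (hg : g ∈ 𝓕)
    (hne : h ≠ g) {e : E} (heh : e ∈ h) (heg : e ∈ g) {v : α} (hv : v ∈ G.V) (hev : e ∈ G.inc v) :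
    ∃ z ∈ 𝓕, Adj h z ∧ Adj g z ∧ (∀ x ∈ 𝓕, G.inc v \ {e} ⊆ x → x = z) ∧ 
      ∃ b c, b ∈ h ∧ b ∈ z ∧ c ∈ g ∧ c ∈ z ∧ G.inc v = {e, b, c} := by
  have hG := hB.cub
  obtain ⟨b, hb, hbv, heb⟩ := other_of_ev hv (hF.1.circ h hh).ev heh hev
  obtain ⟨c, hc, hcv, hec⟩ := other_of_ev hv (hF.1.circ g hg).ev heg hev
  have hbg : b ∉ g := fun hbg => heb (face_inter_le hB hF hh hg hne heh heg hb hbg)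
  have hch : c ∉ h := fun hch => hec (face_inter_le hB hF hh hg hne heh heg hch hc)
  have hbc : b ≠ c := by rintro rfl; exact hbg hc
  have hinc : G.inc v = {e, b, c} := by
    symm
    apply eq_of_subset_of_card_le
    · intro x; simp only [mem_insert, mem_singleton]; rintro (rfl | rfl | rfl) <;> assumption
    · rw [hG.three v hv, card_eq_three.2 ⟨e, b, c, heb, hec, hbc, rfl⟩]
  obtain ⟨z, hz⟩ := card_eq_one.1 (pair_unique hG hF.1.cover hv hbv hcv hbc)
  have hzm : ∀ x, x ∈ 𝓕 ∧ b ∈ x ∧ c ∈ x ↔ x = z := by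
    intro x
    have : x ∈ 𝓕.filter (fun i => b ∈ id i ∧ c ∈ id i) ↔ x ∈ ({z} : Finset (Finset E)) := by rw [hz]
    simpa using this
  obtain ⟨hz1, hz2, hz3⟩ := (hzm z).2 rfl
  refine ⟨z, hz1, adj_of ?_ hb hz2, adj_of ?_ hc hz3, ?_, b, c, hb, hz2, hc, hz3, hinc⟩
  · rintro rfl; exact hch hz3
  · rintro rfl; exact hbg hz2
  · intro x hx hsub
    apply (hzm x).1
    refine ⟨hx, hsub ?_, hsub ?_⟩
    · simp [hbv, heb.symm]
    · simp [hcv, hec.symm]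

lemma nbr (hB : G.Base) (hF : G.PlanarBy 𝓕) (h4 : 4 ≤ G.V.card) {h g : Finset E} (hh : h ∈ 𝓕)
    (hg : g ∈ Nb 𝓕 h) : ∃ z₁ z₂, z₁ ≠ z₂ ∧ (Nb 𝓕 h).filter (Adj g) = {z₁, z₂} := by
  have hG := hB.cub
  obtain ⟨hg, hadj⟩ := mem_Nb.1 hg
  obtain ⟨e, heh, heg⟩ := hadj.edge
  obtain ⟨u, w, he⟩ := exists_ends hG ((hF.1.circ h hh).ev.sub heh)
  obtain ⟨z, hz, hhz, hgz, huz, b, c, hbh, hbz, hcg, hcz, hinc⟩ :=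
    corner hB hF hh hg hadj.1 heh heg he.hu he.left
  obtain ⟨z', hz', hhz', hgz', huz', b', c', hbh', hbz', hcg', hcz', hinc'⟩ :=
    corner hB hF hh hg hadj.1 heh heg he.hw he.right
  refine ⟨z, z', ?_, ?_⟩
  · rintro rfl
    have e1 := face_inter_le hB hF hh hz hhz.1 hbh hbz hbh' hbz'
    have e2 := face_inter_le hB hF hg hz hgz.1 hcg hcz hcg' hcz'
    have huw : ({u, w} : Finset α) ⊆ G.V := by
      intro x; simp only [mem_insert, mem_singleton]; rintro (rfl | rfl)
      · exact he.hu
      · exact he.hw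
    have hcut : G.cut {u, w} = ∅ := by
      rw [eq_empty_iff_forall_notMem]
      intro d hd
      obtain ⟨x, y, hxy, hx, hy⟩ := mem_cut_imp hG huw hd
      have hd' : d ∈ G.inc u ∧ d ∈ G.inc w := by
        have hi : G.inc u = G.inc w := by rw [hinc, hinc', e1, e2]
        simp only [mem_insert, mem_singleton] at hx
        rcases hx with rfl | rfl
        · exact ⟨hxy.left, hi ▸ hxy.left⟩
        · exact ⟨hi ▸ hxy.left, hxy.left⟩
      have h1 := (hxy.iff u he.hu).1 hd'.1
      have h2 := (hxy.iff w he.hw).1 hd'.2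
      simp only [mem_insert, mem_singleton, not_or] at hy
      rcases h1 with h1 | h1
      · rcases h2 with h2 | h2
        · exact he.ne (h1.trans h2.symm)
        · exact hy.2 h2.symm
      · exact hy.1 h1.symm
    have := hB.conn {u, w} huw ⟨u, by simp⟩ (by
      intro h
      rw [← h, card_pair he.ne] at h4
      omega)
    rw [hcut] at this
    simp at this
  · ext x
    simp only [mem_filter, mem_Nb, mem_insert, mem_singleton]
    constructor
    · rintro ⟨⟨hx, hhx⟩, hgx⟩
      obtain ⟨b, hb1, hb2⟩ := hgx.edge
      obtain ⟨c, hc1, hc2⟩ := hhx.edge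
      obtain ⟨v, hv, hvi⟩ := face_triple hB hF hh hg hx hadj.1 hhx.1 hgx.1 heh heg hb1 hb2 hc1 hc2
      have hsub : G.inc v \ {e} ⊆ x := by
        rw [hvi]; intro y hy
        simp only [mem_sdiff, mem_insert, mem_singleton] at hy
        rcases hy with ⟨rfl | rfl | rfl, hy⟩
        · exact (hy rfl).elim
        · exact hb2
        · exact hc2
      have hev : e ∈ G.inc v := by rw [hvi]; simp
      rcases (he.iff v hv).1 hev with rfl | rfl
      · exact Or.inl (huz x hx hsub)
      · exact Or.inr (huz' x hx hsub)
    · rintro (rfl | rfl)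
      · exact ⟨⟨hz, hhz⟩, hgz⟩
      · exact ⟨⟨hz', hhz'⟩, hgz'⟩

lemma Nb_nonempty (hF : G.PlanarBy 𝓕) {f : Finset E} (hf : f ∈ 𝓕) : (Nb 𝓕 f).Nonempty := by
  obtain ⟨e, he⟩ := (hF.1.circ f hf).ne
  obtain ⟨g, hg⟩ := fcs_left hF.1 hf he
  exact ⟨g, mem_Nb.2 ⟨hg.hg, adj_of hg.ne hg.left hg.right⟩⟩

lemma Nb_three (hB : G.Base) (hF : G.PlanarBy 𝓕) (h4 : 4 ≤ G.V.card) {f : Finset E} (hf : f ∈ 𝓕) :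
    3 ≤ (Nb 𝓕 f).card := by
  obtain ⟨g, hg⟩ := Nb_nonempty hF hf
  obtain ⟨z₁, z₂, hne, hz⟩ := nbr hB hF h4 hf hg
  have h1 : ∀ x, x = z₁ ∨ x = z₂ → x ∈ Nb 𝓕 f ∧ Adj g x := by
    intro x hx
    have : x ∈ (Nb 𝓕 f).filter (Adj g) := by rw [hz]; simpa using hx
    simpa using this
  have a1 := h1 z₁ (Or.inl rfl)
  have a2 := h1 z₂ (Or.inr rfl)
  rw [← card_eq_three.2 ⟨g, z₁, z₂, a1.2.1, a2.2.1, hne, rfl⟩]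
  apply card_le_card
  intro x; simp only [mem_insert, mem_singleton]
  rintro (rfl | rfl | rfl)
  · exact hg
  · exact a1.1
  · exact a2.1

lemma Nb_card_le (hF : G.PlanarBy 𝓕) {f : Finset E} (hf : f ∈ 𝓕) : (Nb 𝓕 f).card ≤ f.card := by
  have : ∀ g, ∃ e, g ∈ Nb 𝓕 f → e ∈ f ∧ e ∈ g := by
    intro g
    by_cases hg : g ∈ Nb 𝓕 f
    · obtain ⟨e, he⟩ := (mem_Nb.1 hg).2.edge
      exact ⟨e, fun _ => he⟩
    · by_cases hE : Nonempty E
      · exact ⟨hE.some, fun h => (hg h).elim⟩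
      · obtain ⟨e, he⟩ := (hF.1.circ f hf).ne
        exact (hE ⟨e⟩).elim
  choose φ hφ using this
  apply card_le_card_of_injOn φ
  · intro g hg
    exact (hφ g hg).1
  · intro g hg g' hg' heq
    have h1 := hφ g hg
    have h2 := hφ g' hg'
    rw [← heq] at h2
    obtain ⟨m, ha⟩ := mem_Nb.1 hg
    obtain ⟨m', ha'⟩ := mem_Nb.1 hg'
    have F := fcs_of hF.1 hf m ha.1 h1.1 h1.2
    rcases (F.iff g' m').1 h2.2 with h | h
    · exact (ha'.1 h.symm).elim
    · exact h.symm

lemma nb_tri (hB : G.Base) (hF : G.PlanarBy 𝓕) {h g x y : Finset E} (hh : h ∈ 𝓕)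
    (hg : g ∈ Nb 𝓕 h) (hx : x ∈ Nb 𝓕 h) (hy : y ∈ Nb 𝓕 h) (hgx : Adj g x) (hxy : Adj x y)
    (hgy : Adj g y) (h4 : 4 ≤ (Nb 𝓕 h).card) : False := by
  have hG := hB.cub
  obtain ⟨mg, ag⟩ := mem_Nb.1 hg
  obtain ⟨mx, ax⟩ := mem_Nb.1 hx
  obtain ⟨my, ay⟩ := mem_Nb.1 hy
  obtain ⟨a, ha, ha'⟩ := ag.edge
  obtain ⟨b, hb, hb'⟩ := ax.edge
  obtain ⟨c, hc, hc'⟩ := ay.edge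
  have Fa := fcs_of hF.1 hh mg ag.1 ha ha'
  have Fb := fcs_of hF.1 hh mx ax.1 hb hb'
  have Fc := fcs_of hF.1 hh my ay.1 hc hc'
  have hab : a ≠ b := by
    rintro rfl
    rcases (Fa.iff x mx).1 hb' with h1 | h1
    · exact ax.1 h1.symm
    · exact hgx.1 h1.symm
  have hac : a ≠ c := by
    rintro rfl
    rcases (Fa.iff y my).1 hc' with h1 | h1
    · exact ay.1 h1.symm
    · exact hgy.1 h1.symm
  have hbc : b ≠ c := by
    rintro rfl
    rcases (Fb.iff y my).1 hc' with h1 | h1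
    · exact ay.1 h1.symm
    · exact hxy.1 h1.symm
  have pt : ∀ g x a b, g ∈ 𝓕 → x ∈ 𝓕 → Adj g x → Adj h g → Adj h x → a ∈ h → a ∈ g → b ∈ h → b ∈ x →
      ∃ v ∈ G.V, ∃ s ∈ g, s ∈ x ∧ G.inc v = {a, s, b} := by
    intro g x a b mg mx hgx ag ax ha ha' hb hb'
    obtain ⟨s, hs, hs'⟩ := hgx.edge
    obtain ⟨v, hv, hvi⟩ := face_triple hB hF hh mg mx ag.1 ax.1 hgx.1 ha ha' hs hs' hb hb'
    exact ⟨v, hv, s, hs, hs', hvi⟩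
  obtain ⟨v1, hv1, s1, hs1, hs1', hi1⟩ := pt g x a b mg mx hgx ag ax ha ha' hb hb'
  obtain ⟨v2, hv2, s2, hs2, hs2', hi2⟩ := pt x y b c mx my hxy ax ay hb hb' hc hc'
  obtain ⟨v3, hv3, s3, hs3, hs3', hi3⟩ := pt g y a c mg my hgy ag ay ha ha' hc hc'
  have notin : ∀ g x s, g ∈ 𝓕 → x ∈ 𝓕 → Adj g x → Adj h g → Adj h x → s ∈ g → s ∈ x → s ∉ h := by
    intro g x s mg mx hgx ag ax h1 h2 h3
    have := fcs_of hF.1 mg mx hgx.1 h1 h2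
    rcases (this.iff h hh).1 h3 with h5 | h5
    · exact ag.1 h5
    · exact ax.1 h5
  have n1 : s1 ∉ h := notin g x s1 mg mx hgx ag ax hs1 hs1'
  have n2 : s2 ∉ h := notin x y s2 mx my hxy ax ay hs2 hs2'
  have n3 : s3 ∉ h := notin g y s3 mg my hgy ag ay hs3 hs3'
  have c1 : c ∉ G.inc v1 := by
    rw [hi1]; simp only [mem_insert, mem_singleton]
    rintro (rfl | rfl | rfl)
    · exact hac rfl
    · exact n1 hc
    · exact hbc rfl
  have c2 : a ∉ G.inc v2 := by
    rw [hi2]; simp only [mem_insert, mem_singleton]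
    rintro (rfl | rfl | rfl)
    · exact hab rfl
    · exact n2 ha
    · exact hac rfl
  have c3 : b ∉ G.inc v3 := by
    rw [hi3]; simp only [mem_insert, mem_singleton]
    rintro (rfl | rfl | rfl)
    · exact hab rfl
    · exact n3 hb
    · exact hbc rfl
  have i1a : a ∈ G.inc v1 := by rw [hi1]; simp
  have i1b : b ∈ G.inc v1 := by rw [hi1]; simp
  have i2b : b ∈ G.inc v2 := by rw [hi2]; simp
  have i2c : c ∈ G.inc v2 := by rw [hi2]; simp
  have i3a : a ∈ G.inc v3 := by rw [hi3]; simp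
  have i3c : c ∈ G.inc v3 := by rw [hi3]; simp
  have h12 : v1 ≠ v2 := by rintro rfl; exact c1 i2c
  have h13 : v1 ≠ v3 := by rintro rfl; exact c1 i3c
  have h23 : v2 ≠ v3 := by rintro rfl; exact c2 i3a
  have mk : ∀ e u w, u ∈ G.V → w ∈ G.V → u ≠ w → e ∈ G.inc u → e ∈ G.inc w → G.Ends e u w := by
    intro e u w hu hw hne h1 h2
    obtain ⟨z, hz⟩ := exists_ends' hG hu h1
    rcases (hz.iff w hw).1 h2 with h | h
    · exact (hne h.symm).elim
    · rw [h]; exact hz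
  have Ea := mk a v1 v3 hv1 hv3 h13 i1a i3a
  have Eb := mk b v1 v2 hv1 hv2 h12 i1b i2b
  have Ec := mk c v2 v3 hv2 hv3 h23 i2c i3c
  have hsub : ({a, b, c} : Finset E) ⊆ h := by
    intro z; simp only [mem_insert, mem_singleton]; rintro (rfl | rfl | rfl) <;> assumption
  have hev : G.IsEv {a, b, c} := by
    refine ⟨hsub.trans (hF.1.circ h hh).ev.sub, fun v hv => ?_⟩
    have k1 := Ea.iff v hv
    have k2 := Eb.iff v hv
    have k3 := Ec.iff v hv
    rw [← filter_mem_eq_inter, filter_insert, filter_insert, filter_singleton]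
    by_cases q1 : v = v1
    · subst q1
      rw [if_pos i1a, if_pos i1b, if_neg c1, insert_empty_eq, card_pair hab]; decide
    by_cases q2 : v = v2
    · subst q2
      rw [if_neg c2, if_pos i2b, if_pos i2c, card_pair hbc]; decide
    by_cases q3 : v = v3
    · subst q3
      rw [if_pos i3a, if_neg c3, if_pos i3c, card_pair hac]; decide
    · rw [if_neg (fun h => (k1.1 h).elim q1 q3), if_neg (fun h => (k2.1 h).elim q1 q2),
        if_neg (fun h => (k3.1 h).elim q2 q3)]; simp
  have := (hF.1.circ h hh).min _ hsub hev ⟨a, by simp⟩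
  have hle := Nb_card_le hF hh
  rw [← this] at hle
  have : ({a, b, c} : Finset E).card ≤ 3 := card_le_three
  rw [← ‹({a, b, c} : Finset E) = h›] at h4
  omega

end Gr
end CiDC

namespace CiDC
open Finset
set_option linter.unusedSectionVars false
set_option linter.unusedVariables false

lemma exists_indep {β : Type*} [DecidableEq β] (T : Finset β) (R : β → β → Prop)
    [∀ a b, Decidable (R a b)] (hrefl : ∀ x, R x x) (hsymm : ∀ x y, R x y → R y x) (K : ℕ)
    (hK : ∀ x ∈ T, (T.filter (R x)).card ≤ K) :
    ∃ I ⊆ T, (∀ x ∈ I, ∀ y ∈ I, x ≠ y → ¬ R x y) ∧ T.card ≤ I.card * K := by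
  classical
  obtain ⟨I, hI, hmax⟩ := (T.powerset.filter
    (fun I => ∀ x ∈ I, ∀ y ∈ I, x ≠ y → ¬ R x y)).exists_max_image Finset.card ⟨∅, by simp⟩
  simp only [mem_filter, mem_powerset] at hI hmax
  refine ⟨I, hI.1, hI.2, ?_⟩
  have hsub : T ⊆ I.biUnion (fun x => T.filter (R x)) := by
    intro y hy
    by_contra hcon
    simp only [mem_biUnion, mem_filter, not_exists, not_and] at hcon
    have hyI : y ∉ I := fun h => hcon y h hy (hrefl y)
    have := hmax (insert y I) ⟨insert_subset hy hI.1, ?_⟩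
    · rw [card_insert_of_notMem hyI] at this; omega
    · intro a ha b hb hab
      rcases mem_insert.1 ha with ha' | ha' <;> rcases mem_insert.1 hb with hb' | hb'
      · exact (hab (ha'.trans hb'.symm)).elim
      · rw [ha']; exact fun h => hcon b hb' hy (hsymm _ _ h)
      · rw [hb']; exact fun h => hcon a ha' hy h
      · exact hI.2 a ha' b hb' hab
  calc T.card ≤ _ := card_le_card hsub
    _ ≤ I.card * K := card_biUnion_le_card_mul _ _ _ fun x hx => hK x (hI.1 hx)

lemma colour_extend {β : Type*} [DecidableEq β] (N P : Finset β) (hP : P ⊆ N) (R : β → β → Prop)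
    [∀ a b, Decidable (R a b)] (hirr : ∀ x, ¬ R x x) (hsymm : ∀ x y, R x y → R y x)
    (hdeg : ∀ x ∈ N, (N.filter (R x)).card ≤ 2) (c0 : β → Fin 3)
    (hc0 : ∀ x ∈ P, ∀ y ∈ P, R x y → c0 x ≠ c0 y) :
    ∃ c : β → Fin 3, (∀ x ∈ P, c x = c0 x) ∧ ∀ x ∈ N, ∀ y ∈ N, R x y → c x ≠ c y := by
  have key : ∀ Q : Finset β, Q ⊆ N \ P → ∃ c : β → Fin 3, (∀ x ∈ P, c x = c0 x) ∧
      ∀ x ∈ P ∪ Q, ∀ y ∈ P ∪ Q, R x y → c x ≠ c y := by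
    intro Q
    induction Q using Finset.induction_on with
    | empty => intro _; exact ⟨c0, fun _ _ => rfl, by simpa using hc0⟩
    | insert a Q ha ih =>
      intro hQ
      obtain ⟨c, hc1, hc2⟩ := ih ((subset_insert _ _).trans hQ)
      have haN := hQ (mem_insert_self a Q)
      rw [mem_sdiff] at haN
      have hex : ∃ k : Fin 3, k ∉ (N.filter (R a)).image c := by
        by_contra hcon
        push Not at hcon
        have h1 : (univ : Finset (Fin 3)) ⊆ (N.filter (R a)).image c := fun k _ => hcon k
        have h2 := card_le_card h1
        have h3 := card_image_le (s := N.filter (R a)) (f := c)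
        have h4 := hdeg a haN.1
        simp at h2
        omega
      obtain ⟨k, hk⟩ := hex
      have hk' : ∀ x ∈ N, R a x → c x ≠ k := by
        intro x hx hax heq
        exact hk (mem_image.2 ⟨x, mem_filter.2 ⟨hx, hax⟩, heq⟩)
      have hsubN : P ∪ Q ⊆ N := by
        apply union_subset hP
        exact ((subset_insert _ _).trans hQ).trans sdiff_subset
      have haPQ : a ∉ P ∪ Q := by simp [haN.2, ha]
      refine ⟨Function.update c a k, ?_, ?_⟩
      · intro x hx
        rw [Function.update_of_ne, hc1 x hx]
        rintro rfl; exact haN.2 hx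
      · intro x hx y hy hxy
        rw [union_insert, mem_insert] at hx hy
        rcases hx with rfl | hx <;> rcases hy with rfl | hy
        · exact (hirr _ hxy).elim
        · have : y ≠ x := by rintro rfl; exact haPQ hy
          rw [Function.update_self, Function.update_of_ne this]
          exact (hk' y (hsubN hy) hxy).symm
        · have : x ≠ y := by rintro rfl; exact haPQ hx
          rw [Function.update_self, Function.update_of_ne this]
          exact hk' x (hsubN hx) (hsymm _ _ hxy)
        · have h1 : x ≠ a := by rintro rfl; exact haPQ hx
          have h2 : y ≠ a := by rintro rfl; exact haPQ hy
          rw [Function.update_of_ne h1, Function.update_of_ne h2]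
          exact hc2 x hx y hy hxy
  obtain ⟨c, h1, h2⟩ := key (N \ P) (Subset.refl _)
  rw [union_sdiff_of_subset hP] at h2
  exact ⟨c, h1, h2⟩

namespace Gr

variable {α E : Type*} [DecidableEq α] [DecidableEq E] {G : Gr α E} {𝓕 : Finset (Finset E)}

lemma Fcs.mem_sumset {e : E} {f g : Finset E} (h : Fcs 𝓕 e f g) (he : e ∈ G.edges)
    {M : Finset (Finset E)} (hM : M ⊆ 𝓕) : e ∈ G.sumset M ↔ ¬ (f ∈ M ↔ g ∈ M) := by
  have h1 : M.filter (fun k => e ∈ k) = ({f, g} : Finset (Finset E)).filter (· ∈ M) := by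
    ext k
    simp only [mem_filter, mem_insert, mem_singleton]
    constructor
    · rintro ⟨hk, hek⟩; exact ⟨(h.iff k (hM hk)).1 hek, hk⟩
    · rintro ⟨hk, hkM⟩; exact ⟨hkM, (h.iff k (hM hkM)).2 hk⟩
  rw [sumset, mem_filter, h1, filter_insert, filter_singleton]
  have h2 : ¬ Odd 2 := by decide
  by_cases hu : f ∈ M <;> by_cases hw : g ∈ M <;> simp [hu, hw, he, h.ne, h2]

def cl (𝓕 : Finset (Finset E)) (f : Finset E) : Finset (Finset E) := insert f (Nb 𝓕 f)

def Mset (𝓕 : Finset (Finset E)) (c : Finset E → Finset E → Fin 3) (f : Finset E) (k : Fin 3) :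
    Finset (Finset E) := insert f ((Nb 𝓕 f).filter (fun g => c f g = k))

lemma mem_Mset {c : Finset E → Finset E → Fin 3} {f g : Finset E} {k : Fin 3} :
    g ∈ Mset 𝓕 c f k ↔ g = f ∨ (g ∈ Nb 𝓕 f ∧ c f g = k) := by
  simp [Mset]

lemma Mset_sub_cl {c : Finset E → Finset E → Fin 3} {f : Finset E} {k : Fin 3} :
    Mset 𝓕 c f k ⊆ cl 𝓕 f := insert_subset_insert _ (filter_subset _ _)

lemma cl_sub {f : Finset E} (hf : f ∈ 𝓕) : cl 𝓕 f ⊆ 𝓕 := insert_subset hf (filter_subset _ _)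

lemma cl_edge (h𝓕 : G.CDC 𝓕) {e : E} {f g : Finset E} (F : Fcs 𝓕 e f g) : g ∈ Nb 𝓕 f :=
  mem_Nb.2 ⟨F.hg, adj_of F.ne F.left F.right⟩

def Proper (𝓕 : Finset (Finset E)) (c : Finset E → Finset E → Fin 3) (f : Finset E) : Prop :=
  ∀ x ∈ Nb 𝓕 f, ∀ y ∈ Nb 𝓕 f, Adj x y → c f x ≠ c f y

lemma count_one (h𝓕 : G.CDC 𝓕) {c : Finset E → Finset E → Fin 3} {f : Finset E} (hf : f ∈ 𝓕)
    (hc : Proper 𝓕 c f) {e : E} (he : e ∈ G.edges) {g₁ g₂ : Finset E} (F : Fcs 𝓕 e g₁ g₂) :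
    ∑ k : Fin 3, (if e ∈ G.sumset (Mset 𝓕 c f k) then 1 else 0) =
      (if g₁ ∈ cl 𝓕 f then 1 else 0) + (if g₂ ∈ cl 𝓕 f then 1 else 0) := by
  have hm : ∀ k, e ∈ G.sumset (Mset 𝓕 c f k) ↔ ¬ (g₁ ∈ Mset 𝓕 c f k ↔ g₂ ∈ Mset 𝓕 c f k) :=
    fun k => F.mem_sumset he (Mset_sub_cl.trans (cl_sub hf))
  simp only [hm, mem_Mset, cl, mem_insert]
  have d1 : ∀ a : Fin 3, ∑ k : Fin 3, (if ¬ (a = k) then 1 else 0) = 2 := by decide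
  have d2 : ∀ a : Fin 3, ∑ k : Fin 3, (if (a = k) then 1 else 0) = 1 := by decide
  have d3 : ∀ a b : Fin 3, a ≠ b → ∑ k : Fin 3, (if ¬ (a = k ↔ b = k) then 1 else 0) = 2 := by decide
  by_cases h1 : g₁ = f
  · have h2 : g₂ ≠ f := h1 ▸ F.ne.symm
    have h3 : g₂ ∈ Nb 𝓕 f := h1 ▸ cl_edge h𝓕 F
    simp only [h1, h2, h3, true_and, false_or, true_or, true_iff, if_true]
    exact d1 _
  by_cases h2 : g₂ = f
  · have h3 : g₁ ∈ Nb 𝓕 f := h2 ▸ cl_edge h𝓕 F.symm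
    simp only [h1, h2, h3, true_and, false_or, true_or, iff_true, if_true]
    exact d1 _
  by_cases h3 : g₁ ∈ Nb 𝓕 f <;> by_cases h4 : g₂ ∈ Nb 𝓕 f
  · simp only [h1, h2, h3, h4, true_and, false_or, if_true]
    exact d3 _ _ (hc _ h3 _ h4 (adj_of F.ne F.left F.right))
  · simp only [h1, h2, h3, h4, true_and, false_and, false_or, if_true, if_false, iff_false, not_not]
    exact d2 _
  · simp only [h1, h2, h3, h4, true_and, false_and, false_or, if_true, if_false, false_iff, not_not]
    exact d2 _
  · simp [h1, h2, h3, h4]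

def Sep (𝓕 : Finset (Finset E)) (J : Finset (Finset E)) : Prop :=
  ∀ f ∈ J, ∀ f' ∈ J, f ≠ f' → Disjoint (cl 𝓕 f) (cl 𝓕 f')

def aff (𝓕 J : Finset (Finset E)) : Finset (Finset E) := J.biUnion (cl 𝓕)

def mIdx (𝓕 J : Finset (Finset E)) : Finset (Finset E ⊕ (Finset E × Fin 3)) :=
  (𝓕 \ aff 𝓕 J).disjSum (J ×ˢ univ)

def mA (G : Gr α E) (𝓕 : Finset (Finset E)) (c : Finset E → Finset E → Fin 3) :
    Finset E ⊕ (Finset E × Fin 3) → Finset E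
  | Sum.inl g => g
  | Sum.inr p => G.sumset (Mset 𝓕 c p.1 p.2)

noncomputable def modif (G : Gr α E) (𝓕 J : Finset (Finset E)) (c : Finset E → Finset E → Fin 3) :
    Finset (Finset E) := G.refine (mIdx 𝓕 J) (mA G 𝓕 c)

lemma modif_cover (h𝓕 : G.CDC 𝓕) {J : Finset (Finset E)} (hJ : J ⊆ 𝓕) (hS : Sep 𝓕 J)
    {c : Finset E → Finset E → Fin 3} (hc : ∀ f ∈ J, Proper 𝓕 c f) :
    G.EvCover (mIdx 𝓕 J) (mA G 𝓕 c) := by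
  constructor
  · rintro (g | ⟨f, k⟩) hi
    · simp only [mIdx, inl_mem_disjSum, mem_sdiff] at hi
      exact (h𝓕.circ g hi.1).ev
    · simp only [mIdx, inr_mem_disjSum, mem_product] at hi
      exact isEv_sumset fun g hg => (h𝓕.circ g (cl_sub (hJ hi.1) (Mset_sub_cl hg))).ev
  · intro e he
    obtain ⟨g₁, g₂, F⟩ := exists_fcs h𝓕 he
    rw [card_filter, mIdx, sum_disjSum, sum_product]
    change (∑ g ∈ 𝓕 \ aff 𝓕 J, (if e ∈ g then 1 else 0)) +
      (∑ f ∈ J, ∑ k : Fin 3, (if e ∈ G.sumset (Mset 𝓕 c f k) then 1 else 0)) = 2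
    rw [sum_congr (rfl : J = J) (fun f hf => count_one h𝓕 (hJ hf) (hc f hf) he F), sum_add_distrib]
    have haff : ∀ g, ∑ f ∈ J, (if g ∈ cl 𝓕 f then 1 else 0) = if g ∈ aff 𝓕 J then 1 else 0 := by
      intro g
      split_ifs with hg
      · obtain ⟨f, hf, hgf⟩ := mem_biUnion.1 hg
        rw [sum_eq_single f, if_pos hgf]
        · intro f' hf' hne
          rw [if_neg]
          intro hgf'
          exact disjoint_left.1 (hS f hf f' hf' hne.symm) hgf hgf'
        · intro h; exact (h hf).elim
      · apply sum_eq_zero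
        intro f hf
        rw [if_neg]
        intro hgf
        exact hg (mem_biUnion.2 ⟨f, hf, hgf⟩)
    rw [haff, haff]
    have h1 : ∑ g ∈ 𝓕 \ aff 𝓕 J, (if e ∈ g then 1 else 0) =
        (if g₁ ∈ aff 𝓕 J then 0 else 1) + (if g₂ ∈ aff 𝓕 J then 0 else 1) := by
      rw [← card_filter]
      have : (𝓕 \ aff 𝓕 J).filter (fun g => e ∈ g) =
          ({g₁, g₂} : Finset (Finset E)).filter (· ∉ aff 𝓕 J) := by
        ext g
        simp only [mem_filter, mem_sdiff, mem_insert, mem_singleton]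
        constructor
        · rintro ⟨⟨h1, h2⟩, h3⟩
          exact ⟨(F.iff g h1).1 h3, h2⟩
        · rintro ⟨h1, h2⟩
          have hgF : g ∈ 𝓕 := by
            rcases h1 with rfl | rfl
            · exact F.hf
            · exact F.hg
          exact ⟨⟨hgF, h2⟩, (F.iff g hgF).2 h1⟩
      rw [this, filter_insert, filter_singleton]
      by_cases a1 : g₁ ∈ aff 𝓕 J <;> by_cases a2 : g₂ ∈ aff 𝓕 J <;> simp [a1, a2, F.ne]
    rw [h1]
    split_ifs <;> rfl

lemma mem_modif {J : Finset (Finset E)} {c : Finset E → Finset E → Fin 3} {C : Finset E} :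
    C ∈ modif G 𝓕 J c ↔ (∃ g ∈ 𝓕, g ∉ aff 𝓕 J ∧ C ∈ G.comps g) ∨
      ∃ f ∈ J, ∃ k, C ∈ G.comps (G.sumset (Mset 𝓕 c f k)) := by
  simp only [modif, refine, mem_biUnion]
  constructor
  · rintro ⟨g | ⟨f, k⟩, hi, hC⟩
    · simp only [mIdx, inl_mem_disjSum, mem_sdiff] at hi
      exact Or.inl ⟨g, hi.1, hi.2, hC⟩
    · simp only [mIdx, inr_mem_disjSum, mem_product] at hi
      exact Or.inr ⟨f, hi.1, k, hC⟩
  · rintro (⟨g, hg, hg', hC⟩ | ⟨f, hf, k, hC⟩)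
    · exact ⟨Sum.inl g, by simp [mIdx, hg, hg'], hC⟩
    · exact ⟨Sum.inr (f, k), by simp [mIdx, hf], hC⟩

lemma self_mem_cl {f : Finset E} : f ∈ cl 𝓕 f := mem_insert_self _ _

lemma adj_irr (x : Finset E) : ¬ Adj x x := fun h => h.1 rfl

lemma deg_le (hB : G.Base) (hF : G.PlanarBy 𝓕) (h4 : 4 ≤ G.V.card) {h : Finset E} (hh : h ∈ 𝓕) :
    ∀ x ∈ Nb 𝓕 h, ((Nb 𝓕 h).filter (Adj x)).card ≤ 2 := by
  intro x hx
  obtain ⟨z₁, z₂, -, hz⟩ := nbr hB hF h4 hh hx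
  rw [hz]; exact card_le_two

lemma exists_surj (hB : G.Base) (hF : G.PlanarBy 𝓕) (h4 : 4 ≤ G.V.card) {h : Finset E}
    (hh : h ∈ 𝓕) : ∃ c : Finset E → Fin 3, (∀ x ∈ Nb 𝓕 h, ∀ y ∈ Nb 𝓕 h, Adj x y → c x ≠ c y) ∧
      ∀ k, ∃ g ∈ Nb 𝓕 h, c g = k := by
  obtain ⟨P, hP, hP3⟩ := exists_subset_card_eq (Nb_three hB hF h4 hh)
  obtain ⟨x, y, z, hxy, hxz, hyz, rfl⟩ := card_eq_three.1 hP3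
  let c0 : Finset E → Fin 3 := fun g => if g = x then 0 else if g = y then 1 else 2
  have cx : c0 x = 0 := by simp [c0]
  have cy : c0 y = 1 := by simp [c0, hxy.symm]
  have cz : c0 z = 2 := by simp [c0, hxz.symm, hyz.symm]
  have d01 : (0 : Fin 3) ≠ 1 := by decide
  have d02 : (0 : Fin 3) ≠ 2 := by decide
  have d12 : (1 : Fin 3) ≠ 2 := by decide
  obtain ⟨c, hc1, hc2⟩ := colour_extend (Nb 𝓕 h) _ hP Adj adj_irr (fun _ _ h => h.symm)
    (deg_le hB hF h4 hh) c0 (by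
      intro a ha b hb hab
      simp only [mem_insert, mem_singleton] at ha hb
      rcases ha with rfl | rfl | rfl <;> rcases hb with rfl | rfl | rfl
      · exact (hab.1 rfl).elim
      · rw [cx, cy]; exact d01
      · rw [cx, cz]; exact d02
      · rw [cx, cy]; exact d01.symm
      · exact (hab.1 rfl).elim
      · rw [cy, cz]; exact d12
      · rw [cx, cz]; exact d02.symm
      · rw [cy, cz]; exact d12.symm
      · exact (hab.1 rfl).elim)
  refine ⟨c, hc2, fun k => ?_⟩
  fin_cases k
  · exact ⟨x, hP (by simp), by rw [hc1 x (by simp), cx]; rfl⟩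
  · exact ⟨y, hP (by simp), by rw [hc1 y (by simp), cy]; rfl⟩
  · exact ⟨z, hP (by simp), by rw [hc1 z (by simp), cz]; rfl⟩

lemma circ_mem_comps {C : Finset E} (hC : G.Circ C) : C ∈ G.comps C :=
  mem_comps.2 ⟨Subset.refl _, hC⟩

theorem caseA (hB : G.Base) (hF : G.PlanarBy 𝓕) (h4 : 4 ≤ G.V.card) {I : Finset (Finset E)}
    (hI : I ⊆ 𝓕) (hS : Sep 𝓕 I) : 2 ^ I.card ≤ G.nu := by
  have : ∀ f, ∃ c : Finset E → Fin 3, f ∈ I → (∀ x ∈ Nb 𝓕 f, ∀ y ∈ Nb 𝓕 f, Adj x y → c x ≠ c y) ∧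
      ∀ k, ∃ g ∈ Nb 𝓕 f, c g = k := by
    intro f
    by_cases hf : f ∈ I
    · obtain ⟨c, hc⟩ := exists_surj hB hF h4 (hI hf)
      exact ⟨c, fun _ => hc⟩
    · exact ⟨fun _ => 0, fun h => (hf h).elim⟩
  choose c hc using this
  have hSJ : ∀ J ⊆ I, Sep 𝓕 J := fun J hJ f hf f' hf' => hS f (hJ hf) f' (hJ hf')
  have hdet : ∀ J ⊆ I, ∀ f ∈ I, (f ∈ modif G 𝓕 J c ↔ f ∉ J) := by
    intro J hJ f hf
    have hcirc := hF.1.circ f (hI hf)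
    constructor
    · intro hm hfJ
      rcases mem_modif.1 hm with ⟨g, hg, hga, hC⟩ | ⟨f', hf', k, hC⟩
      · have := (hF.1.circ g hg).min f (mem_comps.1 hC).1 hcirc.ev hcirc.ne
        subst this
        exact hga (mem_biUnion.2 ⟨f, hfJ, self_mem_cl⟩)
      · have hsub := (mem_comps.1 hC).1
        have hMs : Mset 𝓕 c f' k ⊆ 𝓕 := Mset_sub_cl.trans (cl_sub (hI (hJ hf')))
        by_cases hff : f' = f
        · subst hff
          obtain ⟨g, hg, hgk⟩ := (hc f' hf).2 k
          obtain ⟨e, he1, he2⟩ := (mem_Nb.1 hg).2.edge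
          have F := fcs_of hF.1 (hI hf) (mem_Nb.1 hg).1 (mem_Nb.1 hg).2.1 he1 he2
          have := (F.mem_sumset (hcirc.ev.sub he1) hMs).1 (hsub he1)
          apply this
          simp only [mem_Mset, true_or, true_iff]
          exact Or.inr ⟨hg, hgk⟩
        · obtain ⟨e, he⟩ := hcirc.ne
          obtain ⟨g, F⟩ := fcs_left hF.1 (hI hf) he
          have := (F.mem_sumset (hcirc.ev.sub he) hMs).1 (hsub he)
          have hd := disjoint_left.1 (hS f hf f' (hJ hf') (Ne.symm hff))
          have h1 : f ∉ Mset 𝓕 c f' k := fun h => hd self_mem_cl (Mset_sub_cl h)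
          have h2 : g ∉ Mset 𝓕 c f' k := fun h =>
            hd (mem_insert_of_mem (cl_edge hF.1 F)) (Mset_sub_cl h)
          tauto
    · intro hfJ
      refine mem_modif.2 (Or.inl ⟨f, hI hf, ?_, circ_mem_comps hcirc⟩)
      intro h
      obtain ⟨f', hf', hff'⟩ := mem_biUnion.1 h
      have hne : f ≠ f' := by rintro rfl; exact hfJ hf'
      exact disjoint_left.1 (hS f hf f' (hJ hf') hne) self_mem_cl hff'
  rw [← card_powerset]
  apply card_le_card_of_injOn (fun J => modif G 𝓕 J c)
  · intro J hJ
    have hJ := mem_powerset.1 hJ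
    exact mem_cdcs.2 (refine_cdc hB.cub (modif_cover hF.1 (hJ.trans hI) (hSJ J hJ)
      (fun f hf => (hc f (hJ hf)).1)))
  · intro J hJ J' hJ' heq
    have hJ := mem_powerset.1 hJ
    have hJ' := mem_powerset.1 hJ'
    simp only at heq
    ext f
    by_cases hf : f ∈ I
    · have h1 := hdet J hJ f hf
      have h2 := hdet J' hJ' f hf
      rw [heq, h2] at h1
      tauto
    · constructor
      · intro h; exact (hf (hJ h)).elim
      · intro h; exact (hf (hJ' h)).elim

end Gr
end CiDC

namespace CiDC
open Finset
set_option linter.unusedSectionVars false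
set_option linter.unusedVariables false

lemma exists_ball {β : Type*} [DecidableEq β] (N : Finset β) (R : β → β → Prop)
    [∀ a b, Decidable (R a b)]
    (hdeg : ∀ x ∈ N, (N.filter (R x)).card ≤ 2) (g : β) (hg : g ∈ N) :
    ∃ B : ℕ → Finset β, g ∈ B 0 ∧ (∀ k, (B k).card + 1 ≤ 2 ^ (k + 1)) ∧
      ∀ k, ∀ u ∈ B k, ∀ w ∈ N, (w = u ∨ R u w) → w ∈ B (k + 1) := by
  let B : ℕ → Finset β := fun k => Nat.rec {g}
    (fun _ S => insert g (S.biUnion (fun u => N.filter (R u)))) k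
  have B0 : B 0 = {g} := rfl
  have BS : ∀ k, B (k + 1) = insert g ((B k).biUnion (fun u => N.filter (R u))) := fun k => rfl
  have hN : ∀ k, B k ⊆ N := by
    intro k
    cases k with
    | zero => rw [B0]; simpa using hg
    | succ k =>
      rw [BS]
      refine insert_subset hg (biUnion_subset.2 fun u hu => filter_subset _ _)
  have hmono : ∀ k, B k ⊆ B (k + 1) := by
    intro k
    induction k with
    | zero => rw [BS, B0]; simp
    | succ k ih =>
      rw [BS (k + 1), BS k]
      rw [BS k] at ih
      exact insert_subset_insert _ (biUnion_subset_biUnion_of_subset_left _ ih)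
  refine ⟨B, by simp [B0], ?_, ?_⟩
  · intro k
    induction k with
    | zero => simp [B0]
    | succ k ih =>
      have h1 : ((B k).biUnion (fun u => N.filter (R u))).card ≤ (B k).card * 2 :=
        card_biUnion_le_card_mul _ _ _ fun u hu => hdeg u (hN k hu)
      have h2 := card_insert_le g ((B k).biUnion (fun u => N.filter (R u)))
      rw [BS, pow_succ]
      omega
  · intro k u hu w hw h
    rcases h with rfl | h
    · exact hmono k hu
    · rw [BS]
      exact mem_insert_of_mem (mem_biUnion.2 ⟨u, hu, mem_filter.2 ⟨hw, h⟩⟩)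

namespace Gr

variable {α E : Type*} [DecidableEq α] [DecidableEq E] {G : Gr α E} {𝓕 : Finset (Finset E)}

lemma detect (hB : G.Base) (hF : G.PlanarBy 𝓕) {h g x y : Finset E}
    (hh : h ∈ 𝓕) (hg : g ∈ Nb 𝓕 h) (hx : x ∈ Nb 𝓕 h) (hy : y ∈ Nb 𝓕 h)
    {c : Finset E → Finset E → Fin 3} (hcx : c h x = 0) (hcy : c h y = 1)
    {s e s' : E} (hsg : s ∈ g) (hsx : s ∈ x) (heh : e ∈ h) (hex : e ∈ x)
    (hs'x : s' ∈ x) (hs'y : s' ∈ y) (hgx : g ≠ x) (hxy : x ≠ y) :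
    (∃ C ∈ modif G 𝓕 {h} c, s ∈ C ∧ e ∈ C ∧ s' ∈ C) ↔ c h g = 1 := by
  obtain ⟨mg, ag⟩ := mem_Nb.1 hg
  obtain ⟨mx, ax⟩ := mem_Nb.1 hx
  obtain ⟨my, ay⟩ := mem_Nb.1 hy
  have Fs := fcs_of hF.1 mg mx hgx hsg hsx
  have Fe := fcs_of hF.1 hh mx ax.1 heh hex
  have Fs' := fcs_of hF.1 mx my hxy hs'x hs'y
  have es : s ∈ G.edges := (hF.1.circ g mg).ev.sub hsg
  have ee : e ∈ G.edges := (hF.1.circ h hh).ev.sub heh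
  have es' : s' ∈ G.edges := (hF.1.circ x mx).ev.sub hs'x
  have hM : ∀ k, Mset 𝓕 c h k ⊆ 𝓕 := fun k => Mset_sub_cl.trans (cl_sub hh)
  have hhM : ∀ k, h ∈ Mset 𝓕 c h k := fun k => mem_Mset.2 (Or.inl rfl)
  have hNM : ∀ k, ∀ z ∈ Nb 𝓕 h, (z ∈ Mset 𝓕 c h k ↔ c h z = k) := by
    intro k z hz
    rw [mem_Mset]
    have : z ≠ h := fun h' => (mem_Nb.1 hz).2.1 h'.symm
    simp [this, hz]
  constructor
  · rintro ⟨C, hC0, h1, h2, h3⟩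
    rcases mem_modif.1 hC0 with ⟨f, hf, hfa, hC⟩ | ⟨f, hf, k, hC⟩
    · exfalso
      apply hfa
      have := (mem_comps.1 hC).1 h2
      rw [aff, singleton_biUnion]
      rcases (Fe.iff f hf).1 this with rfl | rfl
      · exact self_mem_cl
      · exact mem_insert_of_mem hx
    · rw [mem_singleton] at hf
      subst hf
      have hsub := (mem_comps.1 hC).1
      have q2 := (Fe.mem_sumset ee (hM k)).1 (hsub h2)
      have q1 := (Fs.mem_sumset es (hM k)).1 (hsub h1)
      have q3 := (Fs'.mem_sumset es' (hM k)).1 (hsub h3)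
      have hf := hhM k
      rw [hNM k x hx] at q1 q2 q3
      rw [hNM k g hg] at q1
      rw [hNM k y hy] at q3
      have r1 : c f g = k := by tauto
      have r2 : c f y = k := by tauto
      rw [r1, ← r2, hcy]
  · intro hcg
    have m1 : s ∈ G.sumset (Mset 𝓕 c h 1) := by
      rw [Fs.mem_sumset es (hM 1), hNM 1 x hx, hNM 1 g hg, hcx, hcg]; decide
    have m2 : e ∈ G.sumset (Mset 𝓕 c h 1) := by
      rw [Fe.mem_sumset ee (hM 1), hNM 1 x hx, hcx]; simp [hhM 1]
    have m3 : s' ∈ G.sumset (Mset 𝓕 c h 1) := by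
      rw [Fs'.mem_sumset es' (hM 1), hNM 1 x hx, hNM 1 y hy, hcx, hcy]; decide
    have hev : G.IsEv (G.sumset (Mset 𝓕 c h 1)) :=
      isEv_sumset fun z hz => (hF.1.circ z (hM 1 hz)).ev
    obtain ⟨C, hC, heC⟩ := exists_comp hev m2
    obtain ⟨hCs, hCc⟩ := mem_comps.1 hC
    obtain ⟨p, hp, hp'⟩ := ag.edge
    obtain ⟨q, hq, hq'⟩ := ay.edge
    obtain ⟨v, hv, hvi⟩ := face_triple hB hF hh mg mx ag.1 ax.1 hgx hp hp' hsg hsx heh hex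
    obtain ⟨w, hw, hwi⟩ := face_triple hB hF hh my mx ay.1 ax.1 hxy.symm hq hq' hs'y hs'x heh hex
    have i1 := hev.inc_eq hB.cub hCc.ev hCs hv heC (by rw [hvi]; simp)
    have i2 := hev.inc_eq hB.cub hCc.ev hCs hw heC (by rw [hwi]; simp)
    refine ⟨C, mem_modif.2 (Or.inr ⟨h, mem_singleton_self _, 1, hC⟩), ?_, heC, ?_⟩
    · have : s ∈ C ∩ G.inc v := by rw [i1, mem_inter, hvi]; simp [m1]
      exact (mem_inter.1 this).1
    · have : s' ∈ C ∩ G.inc w := by rw [i2, mem_inter, hwi]; simp [m3]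
      exact (mem_inter.1 this).1

theorem caseB (hB : G.Base) (hF : G.PlanarBy 𝓕) (h4 : 4 ≤ G.V.card) {h : Finset E}
    (hh : h ∈ 𝓕) (hN4 : 4 ≤ (Nb 𝓕 h).card) :
    ∃ k, (Nb 𝓕 h).card ≤ k * 63 ∧ 2 ^ k ≤ G.nu := by
  classical
  have hex : ∀ g, ∃ x y : Finset E, g ∈ Nb 𝓕 h → x ∈ Nb 𝓕 h ∧ y ∈ Nb 𝓕 h ∧ Adj g x ∧ Adj x y ∧
      g ≠ y ∧ ¬ Adj g y := by
    intro g
    by_cases hg : g ∈ Nb 𝓕 h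
    · obtain ⟨z₁, z₂, hz, hzz⟩ := nbr hB hF h4 hh hg
      have h1 : z₁ ∈ (Nb 𝓕 h).filter (Adj g) := by rw [hzz]; simp
      obtain ⟨hx, hgx⟩ := mem_filter.1 h1
      obtain ⟨w₁, w₂, hw, hww⟩ := nbr hB hF h4 hh hx
      have k1 : w₁ ∈ (Nb 𝓕 h).filter (Adj z₁) := by rw [hww]; simp
      have k2 : w₂ ∈ (Nb 𝓕 h).filter (Adj z₁) := by rw [hww]; simp
      obtain ⟨m1, a1⟩ := mem_filter.1 k1
      obtain ⟨m2, a2⟩ := mem_filter.1 k2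
      by_cases hgw : g = w₁
      · exact ⟨z₁, w₂, fun _ => ⟨hx, m2, hgx, a2, by rw [hgw]; exact hw,
          fun hgy => nb_tri hB hF hh hg hx m2 hgx a2 hgy hN4⟩⟩
      · exact ⟨z₁, w₁, fun _ => ⟨hx, m1, hgx, a1, hgw,
          fun hgy => nb_tri hB hF hh hg hx m1 hgx a1 hgy hN4⟩⟩
    · exact ⟨∅, ∅, fun h => (hg h).elim⟩
  choose x y hxy using hex
  let P : Finset E → Finset (Finset E) := fun g => {g, x g, y g}
  have hP : ∀ g a, a ∈ P g ↔ a = g ∨ a = x g ∨ a = y g := fun g a => by simp [P]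
  let R : Finset E → Finset E → Prop := fun g g' => g = g' ∨ ∃ a ∈ P g, ∃ b ∈ P g', a = b ∨ Adj a b
  have hPN : ∀ g ∈ Nb 𝓕 h, P g ⊆ Nb 𝓕 h := by
    intro g hg a ha
    rcases (hP g a).1 ha with rfl | rfl | rfl
    · exact hg
    · exact (hxy g hg).1
    · exact (hxy g hg).2.1
  obtain ⟨I, hI, hind, hcard⟩ := exists_indep (Nb 𝓕 h) R (fun g => Or.inl rfl) (by
    rintro g g' (rfl | ⟨a, ha, b, hb, hab⟩)
    · exact Or.inl rfl
    · refine Or.inr ⟨b, hb, a, ha, ?_⟩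
      rcases hab with rfl | hab
      · exact Or.inl rfl
      · exact Or.inr hab.symm) 63 (by
    intro g hg
    obtain ⟨B, hB0, hBc, hBs⟩ := exists_ball (Nb 𝓕 h) Adj (deg_le hB hF h4 hh) g hg
    have h5 := hBc 5
    have hsub : (Nb 𝓕 h).filter (R g) ⊆ B 5 := by
      intro g' hg'
      obtain ⟨hg', hR⟩ := mem_filter.1 hg'
      rcases hR with rfl | ⟨a, ha, b, hb, hab⟩
      · exact hBs 4 _ (hBs 3 _ (hBs 2 _ (hBs 1 _ (hBs 0 _ hB0 _ hg (Or.inl rfl)) _ hg (Or.inl rfl))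
          _ hg (Or.inl rfl)) _ hg (Or.inl rfl)) _ hg (Or.inl rfl)
      · have ha' := hPN g hg ha
        have hb' := hPN g' hg' hb
        have t2 : a ∈ B 2 := by
          rcases (hP g a).1 ha with rfl | rfl | rfl
          · exact hBs 1 _ (hBs 0 _ hB0 _ hg (Or.inl rfl)) _ hg (Or.inl rfl)
          · exact hBs 1 _ (hBs 0 _ hB0 _ hg (Or.inl rfl)) _ ha' (Or.inr (hxy g hg).2.2.1)
          · exact hBs 1 _ (hBs 0 _ hB0 _ (hxy g hg).1 (Or.inr (hxy g hg).2.2.1)) _ ha'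
              (Or.inr (hxy g hg).2.2.2.1)
        have t3 : b ∈ B 3 := hBs 2 _ t2 _ hb' (by
          rcases hab with rfl | hab
          · exact Or.inl rfl
          · exact Or.inr hab)
        rcases (hP g' b).1 hb with rfl | rfl | rfl
        · exact hBs 4 _ (hBs 3 _ t3 _ hg' (Or.inl rfl)) _ hg' (Or.inl rfl)
        · exact hBs 4 _ (hBs 3 _ t3 _ hg' (Or.inr (hxy g' hg').2.2.1.symm)) _ hg' (Or.inl rfl)
        · exact hBs 4 _ (hBs 3 _ t3 _ (hxy g' hg').1 (Or.inr (hxy g' hg').2.2.2.1.symm)) _ hg'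
            (Or.inr (hxy g' hg').2.2.1.symm)
    have := card_le_card hsub
    omega)
  refine ⟨I.card, hcard, ?_⟩
  have hsame : ∀ g ∈ I, ∀ g' ∈ I, ∀ a ∈ P g, ∀ b ∈ P g', (a = b ∨ Adj a b) → g = g' := by
    intro g hg g' hg' a ha b hb hab
    by_contra hne
    exact hind g hg g' hg' hne (Or.inr ⟨a, ha, b, hb, hab⟩)
  have pg : ∀ g, g ∈ P g := fun g => (hP g g).2 (Or.inl rfl)
  have px : ∀ g, x g ∈ P g := fun g => (hP g _).2 (Or.inr (Or.inl rfl))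
  have py : ∀ g, y g ∈ P g := fun g => (hP g _).2 (Or.inr (Or.inr rfl))
  have d01 : (0 : Fin 3) ≠ 1 := by decide
  have d02 : (0 : Fin 3) ≠ 2 := by decide
  have d12 : (1 : Fin 3) ≠ 2 := by decide
  have hcol : ∀ J : Finset (Finset E), ∃ c : Finset E → Fin 3,
      (∀ a ∈ Nb 𝓕 h, ∀ b ∈ Nb 𝓕 h, Adj a b → c a ≠ c b) ∧
      ∀ g ∈ I, c (x g) = 0 ∧ c (y g) = 1 ∧ (c g = 1 ↔ g ∈ J) := by
    intro J
    let c0 : Finset E → Fin 3 := fun u => if ∃ g ∈ I, u = x g then 0 else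
      if ∃ g ∈ I, u = y g ∨ (u = g ∧ g ∈ J) then 1 else 2
    have cx : ∀ g ∈ I, c0 (x g) = 0 := by
      intro g hg
      exact if_pos ⟨g, hg, rfl⟩
    have cy : ∀ g ∈ I, c0 (y g) = 1 := by
      intro g hg
      have n1 : ¬ ∃ g' ∈ I, y g = x g' := by
        rintro ⟨g', hg', heq⟩
        have := hsame g hg g' hg' _ (py g) _ (px g') (Or.inl heq)
        subst this
        exact (hxy g (hI hg)).2.2.2.1.1 heq.symm
      exact (if_neg n1).trans (if_pos ⟨g, hg, Or.inl rfl⟩)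
    have nx : ∀ g ∈ I, ¬ ∃ g' ∈ I, g = x g' := by
      rintro g hg ⟨g', hg', heq⟩
      have := hsame g hg g' hg' _ (pg g) _ (px g') (Or.inl heq)
      subst this
      exact (hxy g (hI hg)).2.2.1.1 heq
    have cg1 : ∀ g ∈ I, g ∈ J → c0 g = 1 := by
      intro g hg hgJ
      exact (if_neg (nx g hg)).trans (if_pos ⟨g, hg, Or.inr ⟨rfl, hgJ⟩⟩)
    have cg2 : ∀ g ∈ I, g ∉ J → c0 g = 2 := by
      intro g hg hgJ
      refine (if_neg (nx g hg)).trans (if_neg ?_)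
      rintro ⟨g', hg', heq | ⟨rfl, hgJ'⟩⟩
      · have := hsame g hg g' hg' _ (pg g) _ (py g') (Or.inl heq)
        subst this
        exact (hxy g (hI hg)).2.2.2.2.1 heq
      · exact hgJ hgJ'
    have cg0 : ∀ g ∈ I, c0 g ≠ 0 := by
      intro g hg
      by_cases hgJ : g ∈ J
      · rw [cg1 g hg hgJ]; exact d01.symm
      · rw [cg2 g hg hgJ]; exact d02.symm
    obtain ⟨c, hc1, hc2⟩ := colour_extend (Nb 𝓕 h) (I.biUnion P)
      (biUnion_subset.2 fun g hg => hPN g (hI hg)) Adj adj_irr (fun _ _ h => h.symm)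
      (deg_le hB hF h4 hh) c0 (by
        intro a ha b hb hab
        obtain ⟨g, hg, hag⟩ := mem_biUnion.1 ha
        obtain ⟨g', hg', hbg⟩ := mem_biUnion.1 hb
        have := hsame g hg g' hg' _ hag _ hbg (Or.inr hab)
        subst this
        have hq := hxy g (hI hg)
        rcases (hP g a).1 hag with e1 | e1 | e1 <;> rcases (hP g b).1 hbg with e2 | e2 | e2 <;>
          rw [e1, e2] at hab ⊢
        · exact (hab.1 rfl).elim
        · rw [cx g hg]; exact cg0 g hg
        · exact (hq.2.2.2.2.2 hab).elim
        · rw [cx g hg]; exact (cg0 g hg).symm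
        · exact (hab.1 rfl).elim
        · rw [cx g hg, cy g hg]; exact d01
        · exact (hq.2.2.2.2.2 hab.symm).elim
        · rw [cx g hg, cy g hg]; exact d01.symm
        · exact (hab.1 rfl).elim)
    refine ⟨c, hc2, fun g hg => ?_⟩
    have hm : ∀ a ∈ P g, c a = c0 a := fun a ha => hc1 a (mem_biUnion.2 ⟨g, hg, ha⟩)
    rw [hm _ (px g), hm _ (py g), hm _ (pg g)]
    refine ⟨cx g hg, cy g hg, ?_⟩
    by_cases hgJ : g ∈ J
    · simp [cg1 g hg hgJ, hgJ]
    · simp only [cg2 g hg hgJ, hgJ, iff_false]; exact d12.symm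
  choose c hc1 hc2 using hcol
  have hdet : ∀ g ∈ I, ∃ s e s' : E, ∀ J : Finset (Finset E),
      (∃ C ∈ modif G 𝓕 {h} (fun _ => c J), s ∈ C ∧ e ∈ C ∧ s' ∈ C) ↔ g ∈ J := by
    intro g hg
    obtain ⟨hx, hy, agx, axy, hgy, -⟩ := hxy g (hI hg)
    obtain ⟨s, hs1, hs2⟩ := agx.edge
    obtain ⟨s', hs1', hs2'⟩ := axy.edge
    obtain ⟨e, he1, he2⟩ := (mem_Nb.1 hx).2.edge
    refine ⟨s, e, s', fun J => ?_⟩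
    rw [← (hc2 J g hg).2.2]
    exact detect hB hF hh (hI hg) hx hy (c := fun _ => c J) (hc2 J g hg).1 (hc2 J g hg).2.1
      hs1 hs2 he1 he2 hs1' hs2' agx.1 axy.1
  rw [← card_powerset]
  apply card_le_card_of_injOn (fun J => modif G 𝓕 {h} (fun _ => c J))
  · intro J hJ
    refine mem_cdcs.2 (refine_cdc hB.cub (modif_cover hF.1 (by simpa using hh) ?_ ?_))
    · intro f hf f' hf' hne
      rw [mem_singleton] at hf hf'
      exact (hne (hf.trans hf'.symm)).elim
    · intro f hf
      rw [mem_singleton] at hf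
      subst hf
      exact hc1 J
  · intro J hJ J' hJ' heq
    have hJ := mem_powerset.1 hJ
    have hJ' := mem_powerset.1 hJ'
    simp only at heq
    ext g
    by_cases hg : g ∈ I
    · obtain ⟨s, e, s', hd⟩ := hdet g hg
      rw [← hd J, ← hd J', heq]
    · constructor
      · intro h; exact (hg (hJ h)).elim
      · intro h; exact (hg (hJ' h)).elim

end Gr
end CiDC

namespace CiDC
open Finset
set_option linter.unusedSectionVars false
set_option linter.unusedVariables false

lemma even_card_symmDiff {β : Type*} [DecidableEq β] (A B : Finset β)
    (h : Odd A.card ↔ Odd B.card) : Even (symmDiff A B).card := by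
  have h1 := card_sdiff_add_card_inter A B
  have h2 := card_sdiff_add_card_inter B A
  have h3 : (symmDiff A B).card = (A \ B).card + (B \ A).card := by
    rw [symmDiff_def, sup_eq_union, card_union_of_disjoint]
    exact disjoint_sdiff_sdiff
  rw [inter_comm] at h2
  rw [h3]
  simp only [Nat.odd_iff, Nat.even_iff] at *
  omega

namespace Gr

variable {α E : Type*} [DecidableEq α] [DecidableEq E] {G : Gr α E} {𝓕 : Finset (Finset E)}

lemma two_m (hG : G.Cub) : 2 * G.edges.card = 3 * G.V.card := by
  have h := Finset.sum_card_bipartiteAbove_eq_sum_card_bipartiteBelow (s := G.V) (t := G.edges)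
    (fun v e => e ∈ G.inc v)
  have h1 : ∑ v ∈ G.V, (bipartiteAbove (fun v e => e ∈ G.inc v) G.edges v).card = ∑ v ∈ G.V, 3 := by
    apply sum_congr rfl
    intro v hv
    rw [← hG.three v hv, bipartiteAbove]
    congr 1
    ext e
    simp only [mem_filter, and_iff_right_iff_imp]
    exact fun h => inc_sub hv h
  have h2 : ∑ e ∈ G.edges, (bipartiteBelow (fun v e => e ∈ G.inc v) G.V e).card
      = ∑ e ∈ G.edges, 2 := by
    apply sum_congr rfl
    intro e he
    exact hG.two e he
  rw [h1, h2, sum_const, sum_const, smul_eq_mul, smul_eq_mul] at h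
  omega

lemma sum_faces (h𝓕 : G.CDC 𝓕) : ∑ f ∈ 𝓕, f.card = 2 * G.edges.card := by
  have h := Finset.sum_card_bipartiteAbove_eq_sum_card_bipartiteBelow (s := 𝓕) (t := G.edges)
    (fun f e => e ∈ f)
  have h1 : ∑ f ∈ 𝓕, (bipartiteAbove (fun f e => e ∈ f) G.edges f).card = ∑ f ∈ 𝓕, f.card := by
    apply sum_congr rfl
    intro f hf
    rw [bipartiteAbove]
    congr 1
    ext e
    simp only [mem_filter, and_iff_right_iff_imp]
    exact fun h => (h𝓕.circ f hf).ev.sub h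
  have h2 : ∑ e ∈ G.edges, (bipartiteBelow (fun f e => e ∈ f) 𝓕 e).card
      = ∑ e ∈ G.edges, 2 := by
    apply sum_congr rfl
    intro e he
    exact h𝓕.two e he
  rw [h1, h2, sum_const, smul_eq_mul] at h
  omega

lemma edges_le (hF : G.PlanarBy 𝓕) : G.edges.card ≤ G.V.card + 𝓕.card := by
  classical
  have key := card_le_mul_card_image_of_maps_to (s := G.edges.powerset) (t := 𝓕.powerset)
    (f := fun D => 𝓕.filter (fun f => Odd (D ∩ f).card))
    (fun D _ => mem_powerset.2 (filter_subset _ _)) (2 ^ G.V.card) (by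
      intro b hb
      rcases (filter (fun a => filter (fun f => Odd (a ∩ f).card) 𝓕 = b)
        G.edges.powerset).eq_empty_or_nonempty with h | ⟨D0, hD0⟩
      · rw [h]; simp
      · obtain ⟨hD0, hb0⟩ := mem_filter.1 hD0
        rw [mem_powerset] at hD0
        calc _ ≤ (G.V.powerset.image G.cut).card := by
              apply card_le_card_of_injOn (fun D => symmDiff D D0)
              · intro D hD
                obtain ⟨hD, hbD⟩ := mem_filter.1 hD
                rw [mem_powerset] at hD
                obtain ⟨S, hS, hSD⟩ := hF.2 (symmDiff D D0) (by
                  intro e he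
                  rcases mem_symmDiff.1 he with h | h
                  · exact hD h.1
                  · exact hD0 h.1) (by
                  intro f hf
                  have e1 : symmDiff D D0 ∩ f = symmDiff (D ∩ f) (D0 ∩ f) := by
                    ext e; simp only [mem_inter, mem_symmDiff]; tauto
                  rw [e1]
                  apply even_card_symmDiff
                  have := Finset.ext_iff.1 (hbD.trans hb0.symm) f
                  simpa [hf] using this)
                exact mem_coe.2 (mem_image.2 ⟨S, mem_powerset.2 hS, hSD.symm⟩)
              · intro D _ D' _ h
                exact symmDiff_left_injective D0 h
          _ ≤ G.V.powerset.card := card_image_le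
          _ = 2 ^ G.V.card := card_powerset _)
  rw [card_powerset, card_powerset, ← pow_add] at key
  exact (Nat.pow_le_pow_iff_right (by norm_num)).1 key

lemma small_faces (hB : G.Base) (hF : G.PlanarBy 𝓕) :
    G.V.card ≤ 14 * (𝓕.filter (fun f => (Nb 𝓕 f).card ≤ 6)).card := by
  have h1 := two_m hB.cub
  have h2 := sum_faces hF.1
  have h3 := edges_le hF
  have h4 := card_filter_add_card_filter_not (s := 𝓕) (fun f => (Nb 𝓕 f).card ≤ 6)
  have h5 : (𝓕.filter (fun f => ¬ (Nb 𝓕 f).card ≤ 6)).card * 7 ≤ ∑ f ∈ 𝓕, f.card := by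
    calc _ = ∑ f ∈ 𝓕.filter (fun f => ¬ (Nb 𝓕 f).card ≤ 6), 7 := by
          rw [sum_const, smul_eq_mul]
      _ ≤ ∑ f ∈ 𝓕.filter (fun f => ¬ (Nb 𝓕 f).card ≤ 6), f.card := by
          apply sum_le_sum
          intro f hf
          obtain ⟨hf, h6⟩ := mem_filter.1 hf
          have := Nb_card_le hF hf
          omega
      _ ≤ _ := sum_le_sum_of_subset (filter_subset _ _)
  omega

lemma rpow_le_nu {t : ℝ} {k : ℕ} (h : t ≤ k) (hk : 2 ^ k ≤ G.nu) : (2 : ℝ) ^ t ≤ G.nu := by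
  calc (2 : ℝ) ^ t ≤ (2 : ℝ) ^ (k : ℝ) := Real.rpow_le_rpow_of_exponent_le (by norm_num) h
    _ = (2 : ℝ) ^ k := Real.rpow_natCast _ _
    _ ≤ G.nu := by exact_mod_cast hk

theorem base_thm (G : Gr α E) (hB : G.Base) (𝓕 : Finset (Finset E)) (hF : G.PlanarBy 𝓕)
    (h4 : 4 ≤ G.V.card) : (2 : ℝ) ^ (Real.sqrt G.V.card / 100) ≤ G.nu := by
  classical
  set r : ℝ := Real.sqrt G.V.card with hr
  have hr2 : r * r = G.V.card := Real.mul_self_sqrt (Nat.cast_nonneg _)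
  have hr0 : 0 ≤ r := Real.sqrt_nonneg _
  have hsm := small_faces hB hF
  by_cases h100 : r ≤ 100
  · have : (𝓕.filter (fun f => (Nb 𝓕 f).card ≤ 6)).Nonempty := by
      rw [← card_pos]; omega
    obtain ⟨f, hf⟩ := this
    have hf := (mem_filter.1 hf).1
    apply rpow_le_nu (k := 1) (by push_cast; linarith)
    have := caseA hB hF h4 (I := {f}) (by simpa using hf) (by
      intro a ha b hb hne
      rw [mem_singleton] at ha hb
      exact (hne (ha.trans hb.symm)).elim)
    simpa using this
  push Not at h100
  by_cases hbig : ∃ h ∈ 𝓕, 0.63 * r ≤ (Nb 𝓕 h).card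
  · obtain ⟨h, hh, hbig⟩ := hbig
    have hN4 : 4 ≤ (Nb 𝓕 h).card := by
      have : (4 : ℝ) ≤ ((Nb 𝓕 h).card : ℝ) := by linarith
      exact_mod_cast this
    obtain ⟨k, hk, hk2⟩ := caseB hB hF h4 hh hN4
    apply rpow_le_nu (k := k) _ hk2
    have : ((Nb 𝓕 h).card : ℝ) ≤ k * 63 := by exact_mod_cast hk
    linarith
  · push Not at hbig
    set T := 𝓕.filter (fun f => (Nb 𝓕 f).card ≤ 6) with hT
    let D : ℕ := ⌊0.63 * r⌋₊
    have hD : ∀ f ∈ 𝓕, (Nb 𝓕 f).card ≤ D := fun f hf => Nat.le_floor (hbig f hf).le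
    have hD' : (D : ℝ) ≤ 0.63 * r := Nat.floor_le (by linarith)
    have hclc : ∀ f, (cl 𝓕 f).card ≤ (Nb 𝓕 f).card + 1 := fun f => card_insert_le _ _
    obtain ⟨I, hIT, hind, hcard⟩ := exists_indep T
      (fun f f' => ¬ Disjoint (cl 𝓕 f) (cl 𝓕 f'))
      (fun f h => by
        have := disjoint_self.1 h
        have hf := self_mem_cl (𝓕 := 𝓕) (f := f)
        rw [this] at hf
        simp at hf)
      (fun f f' h h' => h h'.symm) (7 * (D + 1)) (by
        intro f hf
        obtain ⟨hf, hf6⟩ := mem_filter.1 hf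
        have hsub : T.filter (fun f' => ¬ Disjoint (cl 𝓕 f) (cl 𝓕 f')) ⊆
            (cl 𝓕 f).biUnion (cl 𝓕) := by
          intro f' hf'
          obtain ⟨hf', hd⟩ := mem_filter.1 hf'
          have hf' := (mem_filter.1 hf').1
          obtain ⟨g, hg, hg'⟩ := not_disjoint_iff.1 hd
          refine mem_biUnion.2 ⟨g, hg, ?_⟩
          rcases mem_insert.1 hg' with rfl | hg'
          · exact self_mem_cl
          · exact mem_insert_of_mem (mem_Nb.2 ⟨hf', (mem_Nb.1 hg').2.symm⟩)
        calc _ ≤ _ := card_le_card hsub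
          _ ≤ (cl 𝓕 f).card * (D + 1) := card_biUnion_le_card_mul _ _ _ fun g hg => by
              have := hclc g
              have := hD g (cl_sub hf hg)
              omega
          _ ≤ 7 * (D + 1) := by
              apply Nat.mul_le_mul_right
              have := hclc f
              omega)
    apply rpow_le_nu (k := I.card) _ (caseA hB hF h4 (hIT.trans (filter_subset _ _)) (by
      intro f hf f' hf' hne
      have := hind f hf f' hf' hne
      simpa using this))
    have hn : G.V.card ≤ 14 * (I.card * (7 * (D + 1))) := hsm.trans (Nat.mul_le_mul_left _ hcard)
    have hn' : (G.V.card : ℝ) ≤ 14 * (I.card * (7 * (D + 1))) := by exact_mod_cast hn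
    rw [← hr2] at hn'
    have hi0 : (0 : ℝ) ≤ I.card := Nat.cast_nonneg _
    have h64 : (D : ℝ) + 1 ≤ 0.64 * r := by linarith
    have : r * r ≤ (64 * I.card) * r := by nlinarith
    have := le_of_mul_le_mul_right this (by linarith)
    linarith

theorem main_gr (G : Gr α E) (hG : G.Cub) (hc : G.Conn2) (𝓕 : Finset (Finset E))
    (hF : G.PlanarBy 𝓕) (h4 : 4 ≤ G.V.card) :
    (2 : ℝ) ^ (Real.sqrt G.V.card / 100) ≤ G.nu :=
  main_of_base base_thm _ G rfl hG hc 𝓕 hF h4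

end Gr
end CiDC

namespace CiDC
open Finset
set_option linter.unusedSectionVars false
set_option linter.unusedVariables false

lemma ker_le {A B : Type*} [Fintype A] [Fintype B] (K : Matrix A B (ZMod 2))
    (hK : ∀ x : B → ZMod 2, K.mulVec x = 0 → ∃ c, x = fun _ => c) :
    Module.finrank (ZMod 2) (LinearMap.ker K.mulVecLin) ≤ 1 := by
  have hle : LinearMap.ker K.mulVecLin ≤ Submodule.span (ZMod 2) {(fun _ => 1 : B → ZMod 2)} := by
    intro x hx
    obtain ⟨c, rfl⟩ := hK x (by simpa using hx)
    rw [Submodule.mem_span_singleton]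
    exact ⟨c, by ext; simp⟩
  refine (Submodule.finrank_mono hle).trans ?_
  have := finrank_span_le_card (R := ZMod 2) ({(fun _ => 1 : B → ZMod 2)} : Set (B → ZMod 2))
  simpa using this

lemma exact_of_dim {Q E V : Type*} [Fintype Q] [Fintype E] [Fintype V] [DecidableEq Q]
    [DecidableEq E] [DecidableEq V] (M : Matrix Q E (ZMod 2)) (N : Matrix E V (ZMod 2))
    (h0 : M * N = 0) (hQ : ∀ x : Q → ZMod 2, M.transpose.mulVec x = 0 → ∃ c, x = fun _ => c)
    (hV : ∀ x : V → ZMod 2, N.mulVec x = 0 → ∃ c, x = fun _ => c)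
    (hdim : Fintype.card V + Fintype.card Q = 2 + Fintype.card E) :
    ∀ D : E → ZMod 2, M.mulVec D = 0 → ∃ s, N.mulVec s = D := by
  have h1 := ker_le M.transpose hQ
  have h2 := ker_le N hV
  have r1 := LinearMap.finrank_range_add_finrank_ker M.transpose.mulVecLin
  have r2 := LinearMap.finrank_range_add_finrank_ker N.mulVecLin
  have r3 := LinearMap.finrank_range_add_finrank_ker M.mulVecLin
  rw [Module.finrank_fintype_fun_eq_card] at r1 r2 r3
  have ht : Module.finrank (ZMod 2) (LinearMap.range M.transpose.mulVecLin) =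
      Module.finrank (ZMod 2) (LinearMap.range M.mulVecLin) := Matrix.rank_transpose M
  have hle : LinearMap.range N.mulVecLin ≤ LinearMap.ker M.mulVecLin := by
    rintro _ ⟨s, rfl⟩
    simp [Matrix.mulVec_mulVec, h0]
  have heq := Submodule.eq_of_le_of_finrank_le hle (by omega)
  intro D hD
  have : D ∈ LinearMap.range N.mulVecLin := by rw [heq]; simpa using hD
  obtain ⟨s, hs⟩ := this
  exact ⟨s, by simpa using hs⟩

namespace Tr
variable {V : Type*} [Fintype V] [DecidableEq V] (G : SimpleGraph V)

open scoped Classical in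
noncomputable def toGr : Gr V (Sym2 V) where
  V := univ
  inc v := univ.filter (fun e => e ∈ G.edgeSet ∧ v ∈ e)

variable {G}

lemma mem_inc {v : V} {e : Sym2 V} : e ∈ (toGr G).inc v ↔ e ∈ G.edgeSet ∧ v ∈ e := by
  simp [toGr]

lemma mem_V (v : V) : v ∈ (toGr G).V := by simp [toGr]

lemma mem_E {e : Sym2 V} : e ∈ (toGr G).edges ↔ e ∈ G.edgeSet := by
  rw [Gr.mem_edges]
  constructor
  · rintro ⟨v, -, h⟩; exact (mem_inc.1 h).1
  · intro h
    induction e with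
    | _ a b => exact ⟨a, mem_V a, mem_inc.2 ⟨h, by simp⟩⟩

lemma inc_image [DecidableRel G.Adj] (v : V) :
    (toGr G).inc v = (univ.filter (fun w => G.Adj v w)).image (fun w => s(v, w)) := by
  ext e
  rw [mem_inc, mem_image]
  constructor
  · rintro ⟨h1, h2⟩
    obtain ⟨w, rfl⟩ := h2
    exact ⟨w, by simpa using h1, rfl⟩
  · rintro ⟨w, hw, rfl⟩
    exact ⟨by simpa using hw, by simp⟩

lemma inj_edge (v : V) : Function.Injective (fun w => s(v, w)) := by
  intro a b h
  simp only [Sym2.eq_iff] at h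
  rcases h with h | h
  · exact h.2
  · exact h.2.trans h.1

lemma filter_V {a b : V} (h : G.Adj a b) (S : Finset V) :
    S.filter (fun v => s(a, b) ∈ (toGr G).inc v) = ({a, b} : Finset V).filter (· ∈ S) := by
  ext v
  simp only [mem_filter, mem_inc, Sym2.mem_iff, mem_insert, mem_singleton]
  have : s(a, b) ∈ G.edgeSet := h
  tauto

lemma cub (hcubic : IsCubic G) : (toGr G).Cub := by
  classical
  constructor
  · intro v hv
    rw [inc_image, card_image_of_injective _ (inj_edge v), ← hcubic v, ← Set.ncard_coe_finset]
    congr 1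
    ext w
    simp
  · intro e he
    induction e with
    | _ a b =>
      have h : G.Adj a b := mem_E.1 he
      rw [filter_V h, filter_true_of_mem (fun v _ => mem_V v), card_pair h.ne]

lemma mem_cut {a b : V} (h : G.Adj a b) (S : Finset V) :
    s(a, b) ∈ (toGr G).cut S ↔ ¬ (a ∈ S ↔ b ∈ S) := by
  have he : s(a, b) ∈ (toGr G).edges := mem_E.2 h
  have h2 : ¬ Odd 2 := by decide
  rw [Gr.cut, mem_filter, filter_V h, filter_insert, filter_singleton]
  by_cases hu : a ∈ S <;> by_cases hw : b ∈ S <;> simp [hu, hw, he, h.ne, h2]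

lemma reach_const {H : SimpleGraph V} {P : V → Prop} (hP : ∀ u w, H.Adj u w → P u → P w)
    {u w : V} (h : H.Reachable u w) (hu : P u) : P w := by
  obtain ⟨p⟩ := h
  induction p with
  | nil => exact hu
  | cons h p ih => exact ih (hP _ _ h hu)

lemma conn2 (hconn : G.Connected) (hbr : ∀ e : Sym2 V, ¬ G.IsBridge e) : (toGr G).Conn2 := by
  intro S hS hne hneV
  by_contra hlt
  have hout : ∃ w, w ∉ S := by
    by_contra hcon
    push Not at hcon
    exact hneV (Subset.antisymm hS fun v _ => hcon v)
  obtain ⟨u, hu⟩ := hne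
  obtain ⟨w, hw⟩ := hout
  have hc : ((toGr G).cut S).card ≤ 1 := by omega
  have hsome : ∃ e, e ∈ (toGr G).cut S := by
    by_contra hcon
    push Not at hcon
    apply hw
    refine reach_const (H := G) (P := (· ∈ S)) ?_ (hconn.preconnected u w) hu
    intro a b hab ha
    by_contra hb
    exact hcon _ ((mem_cut hab S).2 (by tauto))
  obtain ⟨e, he⟩ := hsome
  have hone : ∀ e' ∈ (toGr G).cut S, e' = e := fun e' he' => card_le_one.1 hc e' he' e he
  induction e with
  | _ a b =>
    have hab : G.Adj a b := mem_E.1 (mem_filter.1 he).1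
    have hr := hbr s(a, b)
    rw [SimpleGraph.isBridge_iff, not_not] at hr
    have hstep : ∀ x y, (G.deleteEdges {s(a, b)}).Adj x y → (x ∈ S ↔ y ∈ S) := by
      intro x y hxy
      rw [SimpleGraph.deleteEdges_adj] at hxy
      by_contra hcon
      exact hxy.2 (hone _ ((mem_cut hxy.1 S).2 hcon))
    have hiff : a ∈ S ↔ b ∈ S := by
      constructor
      · exact reach_const (P := (· ∈ S)) (fun x y h => (hstep x y h).1) hr
      · exact reach_const (P := (· ∈ S)) (fun x y h => (hstep x y h).1) hr.symm
    exact (mem_cut hab S).1 he hiff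

end Tr
end CiDC

namespace CiDC
open Finset
set_option linter.unusedSectionVars false
set_option linter.unusedVariables false
namespace Tr
variable {V : Type*} [Fintype V] [DecidableEq V] {G : SimpleGraph V}

lemma even_change {β : Type*} [DecidableEq β] (σ : Equiv.Perm β) (T : Finset β)
    (hT : ∀ d, σ d ∈ T ↔ d ∈ T) (p : β → Prop) [DecidablePred p] :
    Even (T.filter (fun d => ¬ (p d ↔ p (σ d)))).card := by
  have h1 : T.filter (fun d => ¬ (p d ↔ p (σ d))) =
      symmDiff (T.filter p) (T.filter (fun d => p (σ d))) := by
    ext d; simp only [mem_filter, mem_symmDiff]; tauto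
  rw [h1]
  apply even_card_symmDiff
  have h2 : (T.filter (fun d => p (σ d))).card = (T.filter p).card := by
    apply card_bij (fun d _ => σ d)
    · intro d hd
      rw [mem_filter] at hd ⊢
      exact ⟨(hT d).2 hd.1, hd.2⟩
    · intro a _ b _ h; exact σ.injective h
    · intro b hb
      rw [mem_filter] at hb
      refine ⟨σ.symm b, ?_, by simp⟩
      rw [mem_filter]
      refine ⟨(hT _).1 ?_, ?_⟩
      · simpa using hb.1
      · simpa using hb.2
  rw [h2]

variable (rs : RotationSystem G)

def q (d : G.Dart) : Quotient rs.faceSetoid := Quotient.mk rs.faceSetoid d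

lemma q_symm (d : G.Dart) : q rs d.symm = q rs (rs.σ d) := by
  apply Quotient.sound
  change rs.faceMap.SameCycle d.symm (rs.σ d)
  refine ⟨1, ?_⟩
  rw [zpow_one]
  change rs.σ d.symm.symm = rs.σ d
  rw [SimpleGraph.Dart.symm_symm]

lemma q_surj (x : Quotient rs.faceSetoid) : ∃ d, q rs d = x := Quotient.exists_rep x

open scoped Classical in
noncomputable def fA (x : Quotient rs.faceSetoid) : Finset (Sym2 V) :=
  univ.filter (fun e => ∃ d : G.Dart, d.edge = e ∧ q rs d = x ∧ q rs d.symm ≠ x)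

lemma mem_fA (d : G.Dart) (x : Quotient rs.faceSetoid) :
    d.edge ∈ fA rs x ↔ ¬ (q rs d = x ↔ q rs d.symm = x) := by
  simp only [fA, mem_filter, mem_univ, true_and]
  constructor
  · rintro ⟨d', h, h1, h2⟩
    rcases (SimpleGraph.dart_edge_eq_iff d' d).1 h with rfl | rfl
    · tauto
    · rw [SimpleGraph.Dart.symm_symm] at h2; tauto
  · intro h
    by_cases h1 : q rs d = x
    · exact ⟨d, rfl, h1, by tauto⟩
    · exact ⟨d.symm, SimpleGraph.Dart.edge_symm d, by tauto, by
        rw [SimpleGraph.Dart.symm_symm]; exact h1⟩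

lemma exists_dart {e : Sym2 V} (he : e ∈ G.edgeSet) : ∃ d : G.Dart, d.edge = e := by
  induction e with
  | _ a b => exact ⟨⟨(a, b), he⟩, rfl⟩

lemma fA_ev (x : Quotient rs.faceSetoid) : (toGr G).IsEv (fA rs x) := by
  classical
  constructor
  · intro e he
    simp only [fA, mem_filter, mem_univ, true_and] at he
    obtain ⟨d, rfl, -⟩ := he
    exact mem_E.2 d.edge_mem
  · intro v hv
    have h := even_change rs.σ (univ.filter (fun d : G.Dart => d.fst = v))
      (fun d => by simp [rs.fst_eq]) (fun d => q rs d = x)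
    convert h using 1
    symm
    apply card_bij (fun d _ => d.edge)
    · intro d hd
      simp only [mem_filter, mem_univ, true_and] at hd
      rw [mem_inter, mem_fA, q_symm, mem_inc]
      refine ⟨hd.2, d.edge_mem, ?_⟩
      rw [← hd.1]
      exact Sym2.mem_mk_left _ _
    · intro a ha b hb hab
      simp only [mem_filter, mem_univ, true_and] at ha hb
      rcases (SimpleGraph.dart_edge_eq_iff a b).1 hab with h | h
      · exact h
      · exfalso
        have h1 : a.fst = b.snd := by rw [h]; rfl
        rw [ha.1, ← hb.1] at h1
        exact b.adj.ne h1
    · intro e he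
      rw [mem_inter, mem_inc] at he
      obtain ⟨h1, h2, w, rfl⟩ := he
      let d : G.Dart := ⟨(v, w), h2⟩
      refine ⟨d, ?_, rfl⟩
      simp only [mem_filter, mem_univ, true_and]
      refine ⟨rfl, ?_⟩
      rw [← q_symm, ← mem_fA]
      exact h1

lemma fA_perp (hconn : G.Connected)
    (heul : Fintype.card V + rs.numFaces = 2 + G.edgeSet.ncard)
    (D : Finset (Sym2 V)) (hD : D ⊆ (toGr G).edges) (hp : ∀ x, Even (D ∩ fA rs x).card) :
    ∃ S ⊆ (toGr G).V, D = (toGr G).cut S := by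
  classical
  have : Fintype (Quotient rs.faceSetoid) := Fintype.ofFinite _
  have two : ∀ a : ZMod 2, a + a = 0 := by decide
  have eq_of : ∀ a b : ZMod 2, a + b = 0 → a = b := by decide
  let M : Matrix (Quotient rs.faceSetoid) G.edgeSet (ZMod 2) :=
    fun x e => if e.1 ∈ fA rs x then 1 else 0
  let N : Matrix G.edgeSet V (ZMod 2) := fun e v => if v ∈ e.1 then 1 else 0
  have hcast : ∀ (P : Finset (Sym2 V)), P ⊆ (toGr G).edges → Even P.card →
      ∑ e : G.edgeSet, (if e.1 ∈ P then (1 : ZMod 2) else 0) = 0 := by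
    intro P hP hev
    rw [← Finset.sum_filter, Finset.sum_const, nsmul_eq_mul, mul_one]
    have : (univ.filter (fun e : G.edgeSet => e.1 ∈ P)).card = P.card := by
      apply card_bij (fun e _ => e.1)
      · intro e he; exact (mem_filter.1 he).2
      · intro a _ b _ h; exact Subtype.ext h
      · intro b hb
        exact ⟨⟨b, mem_E.1 (hP hb)⟩, by simpa using hb, rfl⟩
    rw [this]
    exact (ZMod.natCast_eq_zero_iff_even).2 hev
  have hN : ∀ (s : V → ZMod 2) (a b : V) (h : G.Adj a b),
      N.mulVec s ⟨s(a, b), h⟩ = s a + s b := by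
    intro s a b h
    simp only [Matrix.mulVec, dotProduct, N, ite_mul, one_mul, zero_mul, Sym2.mem_iff]
    rw [← Finset.sum_filter]
    have : univ.filter (fun v => v = a ∨ v = b) = {a, b} := by ext; simp
    rw [this, sum_pair h.ne]
  have hM : ∀ (y : Quotient rs.faceSetoid → ZMod 2) (d : G.Dart),
      M.transpose.mulVec y ⟨d.edge, d.edge_mem⟩ = y (q rs d) + y (q rs d.symm) := by
    intro y d
    change ∑ x, (if d.edge ∈ fA rs x then (1 : ZMod 2) else 0) * y x = _
    simp only [ite_mul, one_mul, zero_mul, mem_fA]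
    rw [← Finset.sum_filter]
    by_cases hq : q rs d = q rs d.symm
    · rw [hq, two]
      apply sum_eq_zero
      intro x hx
      simp at hx
    · have : univ.filter (fun x => ¬ (q rs d = x ↔ q rs d.symm = x)) =
          {q rs d, q rs d.symm} := by
        ext x
        simp only [mem_filter, mem_univ, true_and, mem_insert, mem_singleton]
        constructor
        · intro h
          by_cases h1 : q rs d = x
          · exact Or.inl h1.symm
          · exact Or.inr (by tauto)
        · rintro (rfl | rfl) h
          · exact hq (h.1 rfl).symm
          · exact hq (h.2 rfl)
      rw [this, sum_pair hq]
  have key := exact_of_dim M N (by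
      ext x v
      rw [Matrix.mul_apply, Matrix.zero_apply]
      rw [← hcast (fA rs x ∩ (toGr G).inc v) (inter_subset_right.trans (Gr.inc_sub (mem_V v)))
        ((fA_ev rs x).even v (mem_V v))]
      apply sum_congr rfl
      intro e _
      have he : e.1 ∈ G.edgeSet := e.2
      simp only [M, N, mem_inter, mem_inc, he, true_and]
      by_cases h1 : e.1 ∈ fA rs x <;> by_cases h2 : v ∈ e.1 <;> simp [h1, h2]) (by
      intro y hy
      have hstep : ∀ d, y (q rs d) = y (q rs d.symm) := by
        intro d
        apply eq_of
        rw [← hM, hy]; rfl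
      have hσ : ∀ d, y (q rs (rs.σ d)) = y (q rs d) := by
        intro d
        rw [← q_symm, ← hstep]
      have hσn : ∀ (n : ℕ) d, y (q rs ((rs.σ ^ n) d)) = y (q rs d) := by
        intro n
        induction n with
        | zero => intro d; simp
        | succ n ih => intro d; rw [pow_succ, Equiv.Perm.mul_apply, ih, hσ]
      have hv : ∀ d d' : G.Dart, d.fst = d'.fst → y (q rs d) = y (q rs d') := by
        intro d d' h
        obtain ⟨n, hn⟩ := rs.cyclic d d' h
        rw [← hn, hσn]
      by_cases hd : Nonempty G.Dart
      · obtain ⟨d0⟩ := hd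
        refine ⟨y (q rs d0), ?_⟩
        ext x
        obtain ⟨d, rfl⟩ := q_surj rs x
        refine reach_const (H := G) (P := fun u => ∀ d : G.Dart, d.fst = u → y (q rs d) = y (q rs d0))
          ?_ (hconn.preconnected d0.fst d.fst) (fun d' h => hv _ _ h) d rfl
        intro u w huw hu d' hd'
        have e1 := hu ⟨(u, w), huw⟩ rfl
        rw [← e1, hstep ⟨(u, w), huw⟩]
        exact hv _ _ hd'
      · refine ⟨0, ?_⟩
        ext x
        obtain ⟨d, rfl⟩ := q_surj rs x
        exact (hd ⟨d⟩).elim) (by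
      intro s hs
      have hstep : ∀ a b, G.Adj a b → s a = s b := by
        intro a b h
        apply eq_of
        rw [← hN s a b h, hs]; rfl
      obtain ⟨v0⟩ := hconn.nonempty
      refine ⟨s v0, ?_⟩
      ext v
      exact reach_const (H := G) (P := fun u => s u = s v0)
        (fun u w h hu => (hstep u w h).symm.trans hu) (hconn.preconnected v0 v) rfl) (by
      rw [← Nat.card_eq_fintype_card (α := Quotient rs.faceSetoid)]
      rw [← Nat.card_eq_fintype_card (α := G.edgeSet)]
      exact heul) (fun e => if e.1 ∈ D then 1 else 0) (by
      ext x
      refine Eq.trans ?_ (hcast (D ∩ fA rs x) (inter_subset_left.trans hD) (hp x))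
      simp only [Matrix.mulVec, dotProduct, M]
      apply sum_congr rfl
      intro e _
      simp only [mem_inter]
      by_cases h1 : e.1 ∈ fA rs x <;> by_cases h2 : e.1 ∈ D <;> simp [h1, h2])
  obtain ⟨s, hs⟩ := key
  refine ⟨univ.filter (fun v => s v = 1), fun v _ => mem_V v, ?_⟩
  have hz : ∀ a b : ZMod 2, (a + b = 1) ↔ ¬ (a = 1 ↔ b = 1) := by decide
  ext e
  by_cases he : e ∈ G.edgeSet
  · induction e with
    | _ a b =>
      rw [mem_cut he]
      have h1 := congrFun hs ⟨s(a, b), he⟩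
      rw [hN s a b he] at h1
      simp only [mem_filter, mem_univ, true_and]
      rw [← hz, h1]
      simp
  · constructor
    · intro h; exact (he (mem_E.1 (hD h))).elim
    · intro h; exact (he (mem_E.1 (mem_filter.1 h).1)).elim

lemma planar (hconn : G.Connected) (hbr : ∀ e : Sym2 V, ¬ G.IsBridge e) (hcubic : IsCubic G)
    (hplanar : HasPlanarEmbedding G) : ∃ 𝓕, (toGr G).PlanarBy 𝓕 := by
  classical
  obtain ⟨rs, heul⟩ := hplanar
  have : Fintype (Quotient rs.faceSetoid) := Fintype.ofFinite _
  refine ⟨(toGr G).refine (univ : Finset (Quotient rs.faceSetoid)) (fA rs),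
    Gr.refine_planar (cub hcubic) ⟨fun x _ => fA_ev rs x, ?_⟩ ?_⟩
  · intro e he
    obtain ⟨d, rfl⟩ := exists_dart (mem_E.1 he)
    by_cases hq : q rs d = q rs d.symm
    · exfalso
      obtain ⟨S, hS, hcut⟩ := fA_perp rs hconn heul {d.edge} (by simpa using he) (by
        intro x
        have : d.edge ∉ fA rs x := by rw [mem_fA, hq]; simp
        rw [singleton_inter_of_notMem this]; simp)
      have hcc : ((toGr G).cut S).card = 1 := by rw [← hcut]; simp
      have := conn2 hconn hbr S hS (by
        rw [nonempty_iff_ne_empty]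
        rintro rfl
        rw [Gr.cut_empty] at hcc; simp at hcc) (by
        rintro rfl
        rw [Gr.cut_univ (cub hcubic)] at hcc; simp at hcc)
      omega
    · have : univ.filter (fun x => d.edge ∈ fA rs x) = {q rs d, q rs d.symm} := by
        ext x
        simp only [mem_filter, mem_univ, true_and, mem_insert, mem_singleton, mem_fA]
        constructor
        · intro h
          by_cases h1 : q rs d = x
          · exact Or.inl h1.symm
          · exact Or.inr (by tauto)
        · rintro (rfl | rfl) h
          · exact hq (h.1 rfl).symm
          · exact hq (h.2 rfl)
      rw [this, card_pair hq]
  · intro D hD hp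
    exact fA_perp rs hconn heul D hD (fun x => hp x (mem_univ x))

end Tr
end CiDC

namespace CiDC
open Finset
set_option linter.unusedSectionVars false
set_option linter.unusedVariables false
namespace Tr
variable {V : Type*} [Fintype V] [DecidableEq V] {G : SimpleGraph V}

def sub (G : SimpleGraph V) (C : Finset (Sym2 V)) : G.Subgraph where
  verts := {v | ∃ w, G.Adj v w ∧ s(v, w) ∈ C}
  Adj u w := G.Adj u w ∧ s(u, w) ∈ C
  adj_sub h := h.1
  edge_vert h := ⟨_, h⟩
  symm := ⟨fun u w h => ⟨h.1.symm, by rw [Sym2.eq_swap]; exact h.2⟩⟩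

lemma sub_adj {C : Finset (Sym2 V)} {u w : V} : (sub G C).Adj u w ↔ G.Adj u w ∧ s(u, w) ∈ C := Iff.rfl

lemma sub_verts {C : Finset (Sym2 V)} {u : V} :
    u ∈ (sub G C).verts ↔ ∃ w, G.Adj u w ∧ s(u, w) ∈ C := Iff.rfl

lemma mem_sub_edgeSet {C : Finset (Sym2 V)} {e : Sym2 V} (he : e ∈ G.edgeSet) :
    e ∈ (sub G C).edgeSet ↔ e ∈ C := by
  induction e with
  | _ a b =>
    rw [SimpleGraph.Subgraph.mem_edgeSet, sub_adj]
    exact and_iff_right he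

lemma sub_inj {C C' : Finset (Sym2 V)} (hC : C ⊆ (toGr G).edges) (hC' : C' ⊆ (toGr G).edges)
    (h : sub G C = sub G C') : C = C' := by
  ext e
  constructor
  · intro he
    have := mem_E.1 (hC he)
    rw [← mem_sub_edgeSet this, ← h, mem_sub_edgeSet this]; exact he
  · intro he
    have := mem_E.1 (hC' he)
    rw [← mem_sub_edgeSet this, h, mem_sub_edgeSet this]; exact he

lemma inter_inc [DecidableRel G.Adj] (C : Finset (Sym2 V)) (v : V) :
    C ∩ (toGr G).inc v =
      (univ.filter (fun w => G.Adj v w ∧ s(v, w) ∈ C)).image (fun w => s(v, w)) := by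
  ext e
  rw [mem_inter, mem_inc, mem_image]
  constructor
  · rintro ⟨h0, h1, w, rfl⟩
    exact ⟨w, by simpa using ⟨h1, h0⟩, rfl⟩
  · rintro ⟨w, hw, rfl⟩
    simp only [mem_filter, mem_univ, true_and] at hw
    exact ⟨hw.2, hw.1, by simp⟩

lemma sub_circuit (hcubic : IsCubic G) {C : Finset (Sym2 V)} (hC : (toGr G).Circ C) :
    IsCircuit (sub G C) := by
  classical
  constructor
  · rw [SimpleGraph.Subgraph.connected_iff]
    obtain ⟨e0, he0⟩ := hC.ne
    have hne : (sub G C).verts.Nonempty := by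
      have := mem_E.1 (hC.ev.sub he0)
      induction e0 with
      | _ a b => exact ⟨a, b, this, he0⟩
    refine ⟨⟨?_⟩, hne⟩
    rintro ⟨v0, hv0⟩ ⟨v1, hv1⟩
    let P : V → Prop := fun v => ∃ hv : v ∈ (sub G C).verts,
      (sub G C).coe.Reachable ⟨v0, hv0⟩ ⟨v, hv⟩
    have hstep : ∀ u w, (sub G C).Adj u w → P u → P w := by
      rintro u w huw ⟨hu, hr⟩
      exact ⟨huw.snd_mem, hr.trans (SimpleGraph.Adj.reachable
        (show (sub G C).coe.Adj ⟨u, hu⟩ ⟨w, huw.snd_mem⟩ from huw))⟩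
    let D : Finset (Sym2 V) := C.filter (fun e => ∃ v ∈ e, P v)
    have hDiff : ∀ u w, G.Adj u w → (s(u, w) ∈ D ↔ s(u, w) ∈ C ∧ P u) := by
      intro u w huw
      simp only [D, mem_filter]
      constructor
      · rintro ⟨h1, v, hv, hP⟩
        refine ⟨h1, ?_⟩
        rcases Sym2.mem_iff.1 hv with rfl | rfl
        · exact hP
        · exact hstep _ _ (sub_adj.2 ⟨huw.symm, by rw [Sym2.eq_swap]; exact h1⟩) hP
      · rintro ⟨h1, h2⟩
        exact ⟨h1, u, by simp, h2⟩
    have hDev : (toGr G).IsEv D := by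
      refine ⟨(filter_subset _ _).trans hC.ev.sub, fun v hv => ?_⟩
      by_cases hP : P v
      · have : D ∩ (toGr G).inc v = C ∩ (toGr G).inc v := by
          rw [inter_inc, inter_inc]
          congr 1
          ext w
          simp only [mem_filter, mem_univ, true_and]
          constructor
          · rintro ⟨h1, h2⟩; exact ⟨h1, ((hDiff v w h1).1 h2).1⟩
          · rintro ⟨h1, h2⟩; exact ⟨h1, (hDiff v w h1).2 ⟨h2, hP⟩⟩
        rw [this]
        exact hC.ev.even v hv
      · have : D ∩ (toGr G).inc v = ∅ := by
          rw [inter_inc, image_eq_empty, filter_eq_empty_iff]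
          rintro w - ⟨h1, h2⟩
          exact hP ((hDiff v w h1).1 h2).2
        rw [this]; simp
    have hP0 : P v0 := ⟨hv0, SimpleGraph.Reachable.refl _⟩
    have hDne : D.Nonempty := by
      obtain ⟨w, h1, h2⟩ := hv0
      exact ⟨s(v0, w), (hDiff v0 w h1).2 ⟨h2, hP0⟩⟩
    have hDC := hC.min D (filter_subset _ _) hDev hDne
    obtain ⟨w, h1, h2⟩ := id hv1
    rw [← hDC] at h2
    obtain ⟨hv, hr⟩ := ((hDiff v1 w h1).1 h2).2
    exact hr
  · intro v hv
    obtain ⟨w, h1, h2⟩ := hv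
    have hc := congrArg Finset.card (inter_inc (G := G) C v)
    rw [card_image_of_injective _ (inj_edge v)] at hc
    have heq : ((sub G C).neighborSet v).ncard =
        (univ.filter (fun w => G.Adj v w ∧ s(v, w) ∈ C)).card := by
      rw [← Set.ncard_coe_finset]
      congr 1
      ext x
      simp [sub_adj]
    rw [heq, ← hc]
    have hev := hC.ev.even v (mem_V v)
    have hle : (C ∩ (toGr G).inc v).card ≤ 3 := by
      rw [← (cub hcubic).three v (mem_V v)]
      exact card_le_card inter_subset_right
    have hpos : 0 < (C ∩ (toGr G).inc v).card :=
      card_pos.2 ⟨s(v, w), mem_inter.2 ⟨h2, mem_inc.2 ⟨h1, by simp⟩⟩⟩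
    rw [Nat.even_iff] at hev
    omega

lemma cidc_finite (G : SimpleGraph V) : {C : Multiset G.Subgraph | IsCiDC G C}.Finite := by
  classical
  have : Fintype G.Subgraph := Fintype.ofFinite _
  apply (Set.finite_Iic (2 • (univ : Finset G.Subgraph).val)).subset
  intro C hC
  rw [Set.mem_Iic, Multiset.le_iff_count]
  intro H
  rw [Multiset.count_nsmul, Multiset.count_eq_one_of_mem (univ : Finset G.Subgraph).nodup
    (mem_univ H)]
  by_cases hH : H ∈ C
  · obtain ⟨hcon, hdeg⟩ := hC.1 H hH
    obtain ⟨v, hv⟩ := ((SimpleGraph.Subgraph.connected_iff).1 hcon).2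
    have h2 := hdeg v hv
    have : (H.neighborSet v).Nonempty := by
      rw [Set.nonempty_iff_ne_empty]
      intro h0
      rw [h0] at h2; simp at h2
    obtain ⟨w, hw⟩ := this
    have hadj : H.Adj v w := hw
    have hcount := hC.2 s(v, w) hadj.adj_sub
    have hle : C.count H ≤ C.countP (fun H => s(v, w) ∈ H.edgeSet) := by
      rw [Multiset.count, Multiset.countP_eq_card_filter, Multiset.countP_eq_card_filter]
      apply Multiset.card_le_card
      apply Multiset.monotone_filter_right
      rintro K rfl
      exact hadj
    rw [mul_one]
    refine hle.trans (le_of_eq ?_)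
    convert hcount
  · rw [Multiset.count_eq_zero_of_notMem hH]; simp

lemma nu_le (hcubic : IsCubic G) : (toGr G).nu ≤ nu G := by
  classical
  have hsub : ((((toGr G).cdcs.image (fun 𝒞 => 𝒞.val.map (sub G))) : Finset (Multiset G.Subgraph)) :
      Set (Multiset G.Subgraph)) ⊆ {C : Multiset G.Subgraph | IsCiDC G C} := by
    intro C hC
    obtain ⟨𝒞, h𝒞, rfl⟩ := mem_image.1 (mem_coe.1 hC)
    have h𝒞 := Gr.mem_cdcs.1 h𝒞
    constructor
    · intro H hH
      obtain ⟨C, hC, rfl⟩ := Multiset.mem_map.1 hH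
      exact sub_circuit hcubic (h𝒞.circ C hC)
    · intro e he
      rw [Multiset.countP_map, ← h𝒞.two e (mem_E.2 he), Finset.card, Finset.filter_val]
      congr 1
      apply Multiset.filter_congr
      intro C hC
      exact mem_sub_edgeSet he
  have h1 := Set.ncard_le_ncard hsub (cidc_finite G)
  rw [Set.ncard_coe_finset, card_image_of_injOn] at h1
  · exact h1
  · intro 𝒞 h𝒞 𝒞' h𝒞' heq
    have h𝒞 := Gr.mem_cdcs.1 (mem_coe.1 h𝒞)
    have h𝒞' := Gr.mem_cdcs.1 (mem_coe.1 h𝒞')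
    have key : ∀ {A B : Finset (Finset (Sym2 V))}, (toGr G).CDC A → (toGr G).CDC B →
        A.val.map (sub G) = B.val.map (sub G) → A ⊆ B := by
      intro A B hA hB h C hC
      have : sub G C ∈ B.val.map (sub G) := by
        rw [← h]; exact Multiset.mem_map_of_mem _ hC
      obtain ⟨C', hC', h'⟩ := Multiset.mem_map.1 this
      rw [← sub_inj (hB.circ C' hC').ev.sub (hA.circ C hC).ev.sub h']
      exact hC'
    exact Subset.antisymm (key h𝒞 h𝒞' heq) (key h𝒞' h𝒞 heq.symm)

end Tr
end CiDC

namespace CiDC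

open SimpleGraph

theorem stmt15 {V : Type*} [Fintype V] (G : SimpleGraph V)
    (hconn : G.Connected) (hbridgeless : ∀ e : Sym2 V, ¬ G.IsBridge e)
    (hcubic : IsCubic G) (hplanar : HasPlanarEmbedding G)
    (hn : 4 ≤ Fintype.card V) :
    (2 : ℝ) ^ (Real.sqrt (Fintype.card V) / 100) ≤ (nu G : ℝ) := by
  classical
  obtain ⟨𝓕, h𝓕⟩ := Tr.planar hconn hbridgeless hcubic hplanar
  have hcard : (Tr.toGr G).V.card = Fintype.card V := rfl
  have h := Gr.main_gr (Tr.toGr G) (Tr.cub hcubic) (Tr.conn2 hconn hbridgeless) 𝓕 h𝓕 (by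
    rw [hcard]; exact hn)
  rw [hcard] at h
  exact h.trans (by exact_mod_cast Tr.nu_le hcubic)

end CiDC
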